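/- Let N ≥ 9. Then the extremal solution u* of the biharmonic MEMS problem (P)_λ on the unit ball is singular, i.e. sup_B u* = 1, and it satisfies the pointwise bounds 1 − C₀|x|^{4/3} ≤ u*(x) ≤ 1 − |x|^{4/3} for all x ∈ B, where C₀ := (λ*/λ̄_N)^{1/3}. -/

import Mathlib

open MeasureTheory Metric Set Filter

/-- The Laplacian of `u : ℝ^N → ℝ`, as the sum of pure second partial derivatives. -/
noncomputable def lap {N : ℕ} (u : EuclideanSpace ℝ (Fin N) → ℝ) (x : EuclideanSpace ℝ (Fin N)) : ℝ :=
  ∑ i : Fin N, fderiv ℝ (fun y => fderiv ℝ u y (EuclideanSpace.single i 1)) x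
    (EuclideanSpace.single i 1)

/-- The biharmonic operator `Δ²`. -/
noncomputable def biharm {N : ℕ} (u : EuclideanSpace ℝ (Fin N) → ℝ)
    (x : EuclideanSpace ℝ (Fin N)) : ℝ :=
  lap (lap u) x

/-- A classical solution of `(P)_λ` on the unit ball `B ⊆ ℝ^N`:
`u ∈ C⁴(B̄)`, `0 < u < 1` in `B`, `Δ²u = λ (1-u)⁻²` in `B`, and `u = 0`, `∂_ν u = 0` on `∂B`. -/
structure IsClassicalSolution (N : ℕ) (lam : ℝ) (u : EuclideanSpace ℝ (Fin N) → ℝ) : Prop where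
  contDiffOn : ContDiffOn ℝ 4 u (closedBall (0 : EuclideanSpace ℝ (Fin N)) 1)
  pos : ∀ x ∈ ball (0 : EuclideanSpace ℝ (Fin N)) 1, 0 < u x
  lt_one : ∀ x ∈ ball (0 : EuclideanSpace ℝ (Fin N)) 1, u x < 1
  eqn : ∀ x ∈ ball (0 : EuclideanSpace ℝ (Fin N)) 1, biharm u x = lam / (1 - u x) ^ 2
  bdry : ∀ x : EuclideanSpace ℝ (Fin N), ‖x‖ = 1 → u x = 0
  bdry_deriv : ∀ x : EuclideanSpace ℝ (Fin N), ‖x‖ = 1 →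
    fderivWithin ℝ u (closedBall (0 : EuclideanSpace ℝ (Fin N)) 1) x x = 0

/-- The set of voltages `λ > 0` for which `(P)_λ` admits a classical solution;
the pull-in voltage `λ*` is its supremum. -/
def solSet (N : ℕ) : Set ℝ := {lam | 0 < lam ∧ ∃ u, IsClassicalSolution N lam u}

/-- `λ̄_N = (8/9)(N - 2/3)(N - 8/3)`. -/
noncomputable def lamBar (N : ℕ) : ℝ := (8 / 9) * ((N : ℝ) - 2 / 3) * ((N : ℝ) - 8 / 3)

section

open Topology

/-- Radial biharmonic operator in the variable `ρ = |x|^2`. -/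
def Bih (N : ℕ) (ρ p2 p3 p4 : ℝ) : ℝ :=
  16 * ρ ^ 2 * p4 + 16 * ((N : ℝ) + 2) * ρ * p3 + 4 * N * ((N : ℝ) + 2) * p2

/-- `φ` is a four times differentiable radial profile on `(0,1)` in the variable `ρ = |x|^2`,
with derivative `φ1` and radial bilaplacian `f`, with mild growth at the origin. -/
def Rad (N : ℕ) (φ φ1 f : ℝ → ℝ) : Prop :=
  ∃ φ2 φ3 φ4 : ℝ → ℝ, (∀ ρ ∈ Ioo (0 : ℝ) 1, HasDerivAt φ (φ1 ρ) ρ ∧ HasDerivAt φ1 (φ2 ρ) ρ ∧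
    HasDerivAt φ2 (φ3 ρ) ρ ∧ HasDerivAt φ3 (φ4 ρ) ρ ∧ Bih N ρ (φ2 ρ) (φ3 ρ) (φ4 ρ) = f ρ) ∧
    Tendsto (fun ρ => ρ ^ 4 * φ2 ρ) (𝓝[>] 0) (𝓝 0) ∧
    Tendsto (fun ρ => ρ ^ 5 * φ3 ρ) (𝓝[>] 0) (𝓝 0)

theorem Rad.lin {N : ℕ} {φ φ1 f ψ ψ1 g : ℝ → ℝ} (h : Rad N φ φ1 f) (k : Rad N ψ ψ1 g) (a b : ℝ) :
    Rad N (fun ρ => a * φ ρ + b * ψ ρ) (fun ρ => a * φ1 ρ + b * ψ1 ρ)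
      (fun ρ => a * f ρ + b * g ρ) := by
  obtain ⟨φ2, φ3, φ4, h1, h2, h3⟩ := h
  obtain ⟨ψ2, ψ3, ψ4, k1, k2, k3⟩ := k
  refine ⟨fun ρ => a * φ2 ρ + b * ψ2 ρ, fun ρ => a * φ3 ρ + b * ψ3 ρ,
    fun ρ => a * φ4 ρ + b * ψ4 ρ, ?_, ?_, ?_⟩
  · intro ρ hρ
    obtain ⟨a1, a2, a3, a4, a5⟩ := h1 ρ hρ
    obtain ⟨b1, b2, b3, b4, b5⟩ := k1 ρ hρ
    refine ⟨(a1.const_mul a).add (b1.const_mul b), (a2.const_mul a).add (b2.const_mul b),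
      (a3.const_mul a).add (b3.const_mul b), (a4.const_mul a).add (b4.const_mul b), ?_⟩
    simp only [Bih] at *
    rw [← a5, ← b5]; ring
  · have := (h2.const_mul a).add (k2.const_mul b)
    simp only [mul_zero, add_zero] at this
    refine this.congr fun x => by ring
  · have := (h3.const_mul a).add (k3.const_mul b)
    simp only [mul_zero, add_zero] at this
    refine this.congr fun x => by ring

theorem Rad.sub {N : ℕ} {φ φ1 f ψ ψ1 g : ℝ → ℝ} (h : Rad N φ φ1 f) (k : Rad N ψ ψ1 g) :
    Rad N (fun ρ => φ ρ - ψ ρ) (fun ρ => φ1 ρ - ψ1 ρ) (fun ρ => f ρ - g ρ) := by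
  have := h.lin k 1 (-1)
  simpa [sub_eq_add_neg] using this

theorem first_order_nonneg {a R : ℝ} (ha : 4 < a) {h h' : ℝ → ℝ}
    (hd : ∀ ρ ∈ Ioo (0 : ℝ) R, HasDerivAt h (h' ρ) ρ)
    (hpos : ∀ ρ ∈ Ioo (0 : ℝ) R, 0 ≤ ρ * h' ρ + a * h ρ)
    (hlim : Tendsto (fun ρ => ρ ^ 4 * h ρ) (𝓝[>] 0) (𝓝 0)) :
    ∀ ρ ∈ Ioo (0 : ℝ) R, 0 ≤ h ρ := by
  have hq : ∀ ρ ∈ Ioo (0 : ℝ) R, HasDerivAt (fun x => x ^ a * h x)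
      (ρ ^ (a - 1) * (ρ * h' ρ + a * h ρ)) ρ := by
    intro ρ hρ
    have := (Real.hasDerivAt_rpow_const (x := ρ) (p := a) (Or.inl hρ.1.ne')).mul (hd ρ hρ)
    refine this.congr_deriv ?_
    have : ρ ^ a = ρ ^ (a - 1) * ρ := by
      rw [← Real.rpow_add_one hρ.1.ne']; congr 1; ring
    rw [this]; ring
  have hmono : MonotoneOn (fun x => x ^ a * h x) (Ioo 0 R) := by
    apply monotoneOn_of_deriv_nonneg (convex_Ioo 0 R)
    · exact fun x hx => (hq x hx).continuousAt.continuousWithinAt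
    · rw [interior_Ioo]; exact fun x hx => (hq x hx).differentiableAt.differentiableWithinAt
    · rw [interior_Ioo]; intro x hx
      rw [(hq x hx).deriv]
      exact mul_nonneg (Real.rpow_nonneg hx.1.le _) (hpos x hx)
  have hl : Tendsto (fun x => x ^ a * h x) (𝓝[>] 0) (𝓝 0) := by
    have h1 : Tendsto (fun x : ℝ => x ^ (a - 4)) (𝓝[>] 0) (𝓝 0) := by
      have : ContinuousAt (fun x : ℝ => x ^ (a - 4)) 0 :=
        Real.continuousAt_rpow_const _ _ (Or.inr (by linarith))
      have h2 := this.tendsto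
      rw [Real.zero_rpow (by linarith)] at h2
      exact h2.mono_left nhdsWithin_le_nhds
    have := h1.mul hlim
    rw [mul_zero] at this
    refine this.congr' ?_
    filter_upwards [self_mem_nhdsWithin] with x hx
    rw [← mul_assoc]; congr 1
    rw [← Real.rpow_natCast, ← Real.rpow_add hx]; congr 1; push_cast; ring
  intro ρ hρ
  have : 0 ≤ ρ ^ a * h ρ := by
    refine le_of_tendsto hl ?_
    filter_upwards [Ioo_mem_nhdsGT hρ.1] with x hx
    exact hmono ⟨hx.1, hx.2.trans hρ.2⟩ hρ hx.2.le
  exact nonneg_of_mul_nonneg_right this (Real.rpow_pos_of_pos hρ.1 _)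

theorem first_order_pos {a R : ℝ} (ha : 4 < a) {h h' : ℝ → ℝ}
    (hd : ∀ ρ ∈ Ioo (0 : ℝ) R, HasDerivAt h (h' ρ) ρ)
    (hpos : ∀ ρ ∈ Ioo (0 : ℝ) R, 0 < ρ * h' ρ + a * h ρ)
    (hlim : Tendsto (fun ρ => ρ ^ 4 * h ρ) (𝓝[>] 0) (𝓝 0)) :
    ∀ ρ ∈ Ioo (0 : ℝ) R, 0 < h ρ := by
  intro ρ hρ
  have h0 := first_order_nonneg ha hd (fun ρ hρ => (hpos ρ hρ).le) hlim
  refine lt_of_le_of_ne (h0 ρ hρ) fun he => ?_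
  have hmin : IsLocalMin h ρ := by
    filter_upwards [Ioo_mem_nhds hρ.1 hρ.2] with x hx
    rw [← he]; exact h0 x hx
  have := hmin.hasDerivAt_eq_zero (hd ρ hρ)
  have h2 := hpos ρ hρ
  rw [this, ← he] at h2
  simp at h2

theorem Rad.second_nonneg {N : ℕ} (hN : 9 ≤ N) {R : ℝ} (hR : R ≤ 1) {φ φ1 f : ℝ → ℝ}
    (h : Rad N φ φ1 f) (hf : ∀ ρ ∈ Ioo (0 : ℝ) R, 0 ≤ f ρ) :
    ∀ ρ ∈ Ioo (0 : ℝ) R, ∃ d, 0 ≤ d ∧ HasDerivAt φ1 d ρ := by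
  obtain ⟨φ2, φ3, φ4, h1, h2, h3⟩ := h
  have hN' : (9 : ℝ) ≤ N := by exact_mod_cast hN
  have sub : ∀ ρ ∈ Ioo (0 : ℝ) R, ρ ∈ Ioo (0 : ℝ) 1 := fun ρ hρ => ⟨hρ.1, hρ.2.trans_le hR⟩
  have he : ∀ ρ ∈ Ioo (0 : ℝ) R, 0 ≤ 4 * ρ * φ3 ρ + (2 * N + 4) * φ2 ρ := by
    apply first_order_nonneg (a := N / 2) (by linarith)
      (h' := fun ρ => 4 * ρ * φ4 ρ + (2 * N + 8) * φ3 ρ)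
    · intro ρ hρ
      obtain ⟨a1, a2, a3, a4, a5⟩ := h1 ρ (sub ρ hρ)
      have := (((hasDerivAt_id ρ).const_mul 4).mul a4).add (a3.const_mul (2 * (N : ℝ) + 4))
      exact this.congr_deriv (by simp; ring)
    · intro ρ hρ
      obtain ⟨a1, a2, a3, a4, a5⟩ := h1 ρ (sub ρ hρ)
      have := hf ρ hρ
      rw [← a5] at this; simp only [Bih] at this
      nlinarith
    · have := (h3.const_mul 4).add (h2.const_mul (2 * (N : ℝ) + 4))
      simp only [mul_zero, add_zero] at this
      refine this.congr fun x => by ring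
  have h2' : ∀ ρ ∈ Ioo (0 : ℝ) R, 0 ≤ φ2 ρ := by
    apply first_order_nonneg (a := N / 2 + 1) (by linarith) (h' := φ3)
    · intro ρ hρ; exact (h1 ρ (sub ρ hρ)).2.2.1
    · intro ρ hρ; have := he ρ hρ; nlinarith
    · exact h2
  exact fun ρ hρ => ⟨φ2 ρ, h2' ρ hρ, (h1 ρ (sub ρ hρ)).2.1⟩

theorem Rad.second_pos {N : ℕ} (hN : 9 ≤ N) {R : ℝ} (hR : R ≤ 1) {φ φ1 f : ℝ → ℝ}
    (h : Rad N φ φ1 f) (hf : ∀ ρ ∈ Ioo (0 : ℝ) R, 0 < f ρ) :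
    ∀ ρ ∈ Ioo (0 : ℝ) R, ∃ d, 0 < d ∧ HasDerivAt φ1 d ρ := by
  obtain ⟨φ2, φ3, φ4, h1, h2, h3⟩ := h
  have hN' : (9 : ℝ) ≤ N := by exact_mod_cast hN
  have sub : ∀ ρ ∈ Ioo (0 : ℝ) R, ρ ∈ Ioo (0 : ℝ) 1 := fun ρ hρ => ⟨hρ.1, hρ.2.trans_le hR⟩
  have he : ∀ ρ ∈ Ioo (0 : ℝ) R, 0 < 4 * ρ * φ3 ρ + (2 * N + 4) * φ2 ρ := by
    apply first_order_pos (a := N / 2) (by linarith)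
      (h' := fun ρ => 4 * ρ * φ4 ρ + (2 * N + 8) * φ3 ρ)
    · intro ρ hρ
      obtain ⟨a1, a2, a3, a4, a5⟩ := h1 ρ (sub ρ hρ)
      have := (((hasDerivAt_id ρ).const_mul 4).mul a4).add (a3.const_mul (2 * (N : ℝ) + 4))
      exact this.congr_deriv (by simp; ring)
    · intro ρ hρ
      obtain ⟨a1, a2, a3, a4, a5⟩ := h1 ρ (sub ρ hρ)
      have := hf ρ hρ
      rw [← a5] at this; simp only [Bih] at this
      nlinarith
    · have := (h3.const_mul 4).add (h2.const_mul (2 * (N : ℝ) + 4))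
      simp only [mul_zero, add_zero] at this
      refine this.congr fun x => by ring
  have h2' : ∀ ρ ∈ Ioo (0 : ℝ) R, 0 < φ2 ρ := by
    apply first_order_pos (a := N / 2 + 1) (by linarith) (h' := φ3)
    · intro ρ hρ; exact (h1 ρ (sub ρ hρ)).2.2.1
    · intro ρ hρ; have := he ρ hρ; nlinarith
    · exact h2
  exact fun ρ hρ => ⟨φ2 ρ, h2' ρ hρ, (h1 ρ (sub ρ hρ)).2.1⟩

/-- Profile with nonnegative bilaplacian is convex in `ρ`. -/
theorem Rad.convexOn {N : ℕ} (hN : 9 ≤ N) {R : ℝ} (hR : R ≤ 1) {φ φ1 f : ℝ → ℝ}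
    (h : Rad N φ φ1 f) (hf : ∀ ρ ∈ Ioo (0 : ℝ) R, 0 ≤ f ρ) : ConvexOn ℝ (Ioo 0 R) φ := by
  have h2 := h.second_nonneg hN hR hf
  obtain ⟨φ2, φ3, φ4, h1, -, -⟩ := h
  have sub : ∀ ρ ∈ Ioo (0 : ℝ) R, ρ ∈ Ioo (0 : ℝ) 1 := fun ρ hρ => ⟨hρ.1, hρ.2.trans_le hR⟩
  have hm : MonotoneOn φ1 (Ioo 0 R) := by
    apply monotoneOn_of_deriv_nonneg (convex_Ioo 0 R)
    · exact fun x hx => (h1 x (sub x hx)).2.1.continuousAt.continuousWithinAt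
    · rw [interior_Ioo]
      exact fun x hx => (h1 x (sub x hx)).2.1.differentiableAt.differentiableWithinAt
    · rw [interior_Ioo]; intro x hx
      obtain ⟨d, hd, hd'⟩ := h2 x hx
      rw [hd'.deriv]; exact hd
  apply MonotoneOn.convexOn_of_deriv (convex_Ioo 0 R)
  · exact fun x hx => (h1 x (sub x hx)).1.continuousAt.continuousWithinAt
  · rw [interior_Ioo]
    exact fun x hx => (h1 x (sub x hx)).1.differentiableAt.differentiableWithinAt
  · rw [interior_Ioo]
    intro x hx y hy hxy
    rw [(h1 x (sub x hx)).1.deriv, (h1 y (sub y hy)).1.deriv]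
    exact hm hx hy hxy

/-- Strict Boggio-type principle. -/
theorem Rad.boggio {N : ℕ} (hN : 9 ≤ N) {R : ℝ} (hR : R ≤ 1) {φ φ1 f : ℝ → ℝ}
    (h : Rad N φ φ1 f) (hf : ∀ ρ ∈ Ioo (0 : ℝ) R, 0 < f ρ)
    (hc : ContinuousOn φ (Ioc 0 R)) (hc1 : ContinuousOn φ1 (Ioc 0 R)) (h1R : φ1 R ≤ 0) :
    ∀ ρ ∈ Ioo (0 : ℝ) R, φ R < φ ρ := by
  have h2 := h.second_pos hN hR hf
  obtain ⟨φ2, φ3, φ4, h1, -, -⟩ := h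
  have sub : ∀ ρ ∈ Ioo (0 : ℝ) R, ρ ∈ Ioo (0 : ℝ) 1 := fun ρ hρ => ⟨hρ.1, hρ.2.trans_le hR⟩
  have hm : StrictMonoOn φ1 (Ioc 0 R) := by
    apply strictMonoOn_of_deriv_pos (convex_Ioc 0 R) hc1
    rw [interior_Ioc]; intro x hx
    obtain ⟨d, hd, hd'⟩ := h2 x hx
    rw [hd'.deriv]; exact hd
  have ha : StrictAntiOn φ (Ioc 0 R) := by
    apply strictAntiOn_of_deriv_neg (convex_Ioc 0 R) hc
    rw [interior_Ioc]; intro x hx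
    rw [(h1 x (sub x hx)).1.deriv]
    exact (hm ⟨hx.1, hx.2.le⟩ ⟨hx.1.trans hx.2, le_rfl⟩ hx.2).trans_le h1R
  intro ρ hρ
  exact ha ⟨hρ.1, hρ.2.le⟩ ⟨hρ.1.trans hρ.2, le_rfl⟩ hρ.2

theorem rad_rpow (N : ℕ) {k : ℝ} (hk : -2 < k) :
    Rad N (fun ρ => ρ ^ k) (fun ρ => k * ρ ^ (k - 1))
      (fun ρ => (2 * k * (2 * k - 2 + N)) * (2 * (k - 1) * (2 * k - 4 + N)) * ρ ^ (k - 2)) := by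
  refine ⟨fun ρ => k * ((k - 1) * ρ ^ (k - 2)), fun ρ => k * ((k - 1) * ((k - 2) * ρ ^ (k - 3))),
    fun ρ => k * ((k - 1) * ((k - 2) * ((k - 3) * ρ ^ (k - 4)))), ?_, ?_, ?_⟩
  · intro ρ hρ
    have hd : ∀ p q : ℝ, q = p - 1 → HasDerivAt (fun x : ℝ => x ^ p) (p * ρ ^ q) ρ := by
      intro p q h
      rw [h]; exact Real.hasDerivAt_rpow_const (Or.inl hρ.1.ne')
    refine ⟨hd _ _ rfl, (hd _ _ (by ring)).const_mul _,
      ((hd _ _ (by ring)).const_mul _).const_mul _,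
      (((hd _ _ (by ring)).const_mul _).const_mul _).const_mul _, ?_⟩
    have e3 : ρ ^ (k - 3) * ρ = ρ ^ (k - 2) := by
      rw [← Real.rpow_add_one hρ.1.ne']; congr 1; ring
    have e4 : ρ ^ (k - 4) * ρ ^ 2 = ρ ^ (k - 2) := by
      rw [← Real.rpow_natCast, ← Real.rpow_add hρ.1]; congr 1; push_cast; ring
    simp only [Bih]
    have : 16 * ρ ^ 2 * (k * ((k - 1) * ((k - 2) * ((k - 3) * ρ ^ (k - 4))))) +
        16 * ((N : ℝ) + 2) * ρ * (k * ((k - 1) * ((k - 2) * ρ ^ (k - 3)))) +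
        4 * N * ((N : ℝ) + 2) * (k * ((k - 1) * ρ ^ (k - 2))) =
        16 * (k * ((k - 1) * ((k - 2) * (k - 3)))) * (ρ ^ (k - 4) * ρ ^ 2) +
        16 * ((N : ℝ) + 2) * (k * ((k - 1) * (k - 2))) * (ρ ^ (k - 3) * ρ) +
        4 * N * ((N : ℝ) + 2) * (k * ((k - 1) * ρ ^ (k - 2))) := by ring
    rw [this, e3, e4]; ring
  all_goals
    have h1 : Tendsto (fun x : ℝ => x ^ (k + 2)) (𝓝[>] 0) (𝓝 0) := by
      have : ContinuousAt (fun x : ℝ => x ^ (k + 2)) 0 :=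
        Real.continuousAt_rpow_const _ _ (Or.inr (by linarith))
      have h2 := this.tendsto
      rw [Real.zero_rpow (by linarith)] at h2
      exact h2.mono_left nhdsWithin_le_nhds
  · have h2 := h1.const_mul (k * (k - 1))
    rw [mul_zero] at h2
    refine h2.congr' ?_
    filter_upwards [self_mem_nhdsWithin] with x hx
    have : x ^ (k + 2) = x ^ 4 * x ^ (k - 2) := by
      rw [← Real.rpow_natCast, ← Real.rpow_add hx]; congr 1; push_cast; ring
    rw [this]; ring
  · have h2 := h1.const_mul (k * (k - 1) * (k - 2))
    rw [mul_zero] at h2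
    refine h2.congr' ?_
    filter_upwards [self_mem_nhdsWithin] with x hx
    have : x ^ (k + 2) = x ^ 5 * x ^ (k - 3) := by
      rw [← Real.rpow_natCast, ← Real.rpow_add hx]; congr 1; push_cast; ring
    rw [this]; ring

theorem Rad.congr {N : ℕ} {φ φ1 f ψ ψ1 g : ℝ → ℝ} (h : Rad N φ φ1 f)
    (h0 : ∀ ρ ∈ Ioo (0 : ℝ) 1, φ ρ = ψ ρ) (h1 : ∀ ρ ∈ Ioo (0 : ℝ) 1, φ1 ρ = ψ1 ρ)
    (hf : ∀ ρ ∈ Ioo (0 : ℝ) 1, f ρ = g ρ) : Rad N ψ ψ1 g := by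
  obtain ⟨φ2, φ3, φ4, a, b⟩ := h
  refine ⟨φ2, φ3, φ4, ?_, b⟩
  intro ρ hρ
  obtain ⟨a1, a2, a3, a4, a5⟩ := a ρ hρ
  refine ⟨?_, ?_, a3, a4, a5.trans (hf ρ hρ)⟩
  · rw [← h1 ρ hρ]
    apply a1.congr_of_eventuallyEq
    filter_upwards [Ioo_mem_nhds hρ.1 hρ.2] with x hx
    exact (h0 x hx).symm
  · apply a2.congr_of_eventuallyEq
    filter_upwards [Ioo_mem_nhds hρ.1 hρ.2] with x hx
    exact (h1 x hx).symm

/-- `om = 1 - w` where `w` is the singular stable subsolution `(1 - r^{4/3})^2`. -/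
noncomputable def om (ρ : ℝ) : ℝ := 2 * ρ ^ (2 / 3 : ℝ) - ρ ^ (4 / 3 : ℝ)
noncomputable def om1 (ρ : ℝ) : ℝ := (4 / 3) * ρ ^ (-1 / 3 : ℝ) - (4 / 3) * ρ ^ (1 / 3 : ℝ)
noncomputable def lamP (N : ℕ) : ℝ := 42 / 5 * lamBar N
noncomputable def VV (N : ℕ) (ρ : ℝ) : ℝ := 2 * lamP N / (om ρ) ^ 3
noncomputable def KK (N : ℕ) : ℝ := (16 / 9) * ((N : ℝ) + 2 / 3) * ((N : ℝ) - 4 / 3)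
noncomputable def chi (ρ : ℝ) : ℝ := ρ ^ (-1 : ℝ) - 19 / 10 + ρ
noncomputable def chi1 (ρ : ℝ) : ℝ := - ρ ^ (-2 : ℝ) + 1

theorem lamBar_pos {N : ℕ} (hN : 9 ≤ N) : 0 < lamBar N := by
  have hN' : (9 : ℝ) ≤ N := by exact_mod_cast hN
  unfold lamBar
  have h1 : 0 < (N : ℝ) - 2 / 3 := by linarith
  have h2 : 0 < (N : ℝ) - 8 / 3 := by linarith
  positivity

theorem lamP_pos {N : ℕ} (hN : 9 ≤ N) : 0 < lamP N := by
  have := lamBar_pos hN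
  unfold lamP; linarith

theorem exists_cube {ρ : ℝ} (h : ρ ∈ Ioc (0 : ℝ) 1) : ∃ s : ℝ, s ∈ Ioc (0 : ℝ) 1 ∧ ρ = s ^ 3 ∧
    ∀ k : ℤ, ρ ^ ((k : ℝ) / 3) = s ^ k := by
  refine ⟨ρ ^ (1 / 3 : ℝ), ⟨Real.rpow_pos_of_pos h.1 _,
    Real.rpow_le_one h.1.le h.2 (by norm_num)⟩, ?_, ?_⟩
  · rw [← Real.rpow_natCast, ← Real.rpow_mul h.1.le]; norm_num
  · intro k
    rw [← Real.rpow_intCast, ← Real.rpow_mul h.1.le]; congr 1; ring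

theorem om_eq {ρ s : ℝ} (hk : ∀ k : ℤ, ρ ^ ((k : ℝ) / 3) = s ^ k) :
    om ρ = s ^ 2 * (2 - s ^ 2) := by
  have h2 := hk 2
  have h4 := hk 4
  norm_num at h2 h4
  unfold om; rw [h2, h4]
  ring

theorem om_pos {ρ : ℝ} (h : ρ ∈ Ioc (0 : ℝ) 1) : 0 < om ρ := by
  obtain ⟨s, hs, -, hk⟩ := exists_cube h
  rw [om_eq hk]
  have := hs.1
  have : 0 < 2 - s ^ 2 := by nlinarith [hs.2]
  positivity

theorem VV_pos {N : ℕ} (hN : 9 ≤ N) {ρ : ℝ} (h : ρ ∈ Ioc (0 : ℝ) 1) : 0 < VV N ρ := by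
  have := om_pos h
  have := lamP_pos hN
  unfold VV; positivity

theorem om_one : om 1 = 1 := by simp [om]; norm_num
theorem om1_one : om1 1 = 0 := by simp [om1]

theorem poly_ineq {s : ℝ} (h0 : 0 < s) (h1 : s ≤ 1) :
    33 / 5 * (1 - 19 / 10 * s ^ 3 + s ^ 6) < (2 - s ^ 2) ^ 3 := by
  have key : (2 - s ^ 2) ^ 3 - 33 / 5 * (1 - 19 / 10 * s ^ 3 + s ^ 6) =
    (7 / 5) * (s ^ 0 * (1 - s) ^ 15) + (21 / 1) * (s ^ 1 * (1 - s) ^ 14) + (135 / 1) * (s ^ 2 * (1 - s) ^ 13) + (24677 / 50) * (s ^ 3 * (1 - s) ^ 12) + (28287 / 25) * (s ^ 4 * (1 - s) ^ 11) + (41646 / 25) * (s ^ 5 * (1 - s) ^ 10) + (7541 / 5) * (s ^ 6 * (1 - s) ^ 9) + (6939 / 10) * (s ^ 7 * (1 - s) ^ 8) + (1377 / 25) * (s ^ 8 * (1 - s) ^ 7) + (3389 / 25) * (s ^ 9 * (1 - s) ^ 6) + (12657 / 25) * (s ^ 10 * (1 - s) ^ 5) + (5607 / 10) * (s ^ 11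 * (1 - s) ^ 4) + (1577 / 5) * (s ^ 12 * (1 - s) ^ 3) + (2376 / 25) * (s ^ 13 * (1 - s) ^ 2) + (327 / 25) * (s ^ 14 * (1 - s) ^ 1) + (17 / 50) * (s ^ 15 * (1 - s) ^ 0) := by ring
  have h1' : 0 ≤ 1 - s := by linarith
  have h2 : 0 ≤ s := h0.le
  rcases eq_or_lt_of_le h1 with h | h
  · subst h; norm_num
  · have h1' : 0 < 1 - s := by linarith
    have : 0 < (2 - s ^ 2) ^ 3 - 33 / 5 * (1 - 19 / 10 * s ^ 3 + s ^ 6) := by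
      rw [key]; positivity
    linarith

theorem poly_ineq2 {t : ℝ} (h0 : 0 < t) (h1 : t ≤ 1) :
    (2 + 281 / 100 * t) * (2 - t) ^ 2 ≤ 42 / 5 := by
  rcases le_total t (1 / 2) with h | h
  · nlinarith [mul_nonneg (sq_nonneg t) (sub_nonneg.2 h), sq_nonneg (t - 1 / 5)]
  · nlinarith [mul_nonneg (sq_nonneg t) (sub_nonneg.2 h1), mul_nonneg h0.le (sub_nonneg.2 h)]

/-- `V χ < Δ² χ`. -/
theorem VV_chi {N : ℕ} (hN : 9 ≤ N) {ρ : ℝ} (h : ρ ∈ Ioc (0 : ℝ) 1) :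
    VV N ρ * chi ρ < 8 * ((N : ℝ) - 4) * (N - 6) * ρ ^ (-3 : ℝ) := by
  have hN' : (9 : ℝ) ≤ N := by exact_mod_cast hN
  obtain ⟨s, hs, hs3, hk⟩ := exists_cube h
  have hm3 := hk (-3)
  have hm9 := hk (-9)
  norm_num at hm3 hm9
  have e3 : ρ ^ (-1 : ℝ) = (s ^ 3)⁻¹ := by rw [Real.rpow_neg_one, hs3]
  have e9 : ρ ^ (-3 : ℝ) = (s ^ 9)⁻¹ := by
    rw [Real.rpow_neg h.1.le, hs3]; norm_cast; ring
  have hp := poly_ineq hs.1 hs.2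
  have h2s : 0 < 2 - s ^ 2 := by nlinarith [hs.1, hs.2]
  have hs0 := hs.1
  have hQ : 84 / 5 * lamBar N ≤ 33 / 5 * (8 * ((N : ℝ) - 4) * (N - 6)) := by
    unfold lamBar; nlinarith
  have hlb := lamBar_pos hN
  have hchi : chi ρ = (1 - 19 / 10 * s ^ 3 + s ^ 6) / s ^ 3 := by
    unfold chi; rw [e3, hs3]; field_simp
  rw [VV, om_eq hk, hchi, e9, lamP]
  have : 2 * (42 / 5 * lamBar N) / (s ^ 2 * (2 - s ^ 2)) ^ 3 *
      ((1 - 19 / 10 * s ^ 3 + s ^ 6) / s ^ 3) =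
      (84 / 5 * lamBar N * (1 - 19 / 10 * s ^ 3 + s ^ 6)) / (2 - s ^ 2) ^ 3 * (s ^ 9)⁻¹ := by
    field_simp; ring
  rw [this]
  apply mul_lt_mul_of_pos_right _ (by positivity)
  rw [div_lt_iff₀ (by positivity)]
  have hQ0 : 0 < 8 * ((N : ℝ) - 4) * (N - 6) := by
    have h1 : 0 < (N : ℝ) - 4 := by linarith
    have h2 : 0 < (N : ℝ) - 6 := by linarith
    positivity
  have hpos : 0 ≤ 1 - 19 / 10 * s ^ 3 + s ^ 6 := by nlinarith [sq_nonneg (1 - s ^ 3), pow_pos hs0 3]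
  calc 84 / 5 * lamBar N * (1 - 19 / 10 * s ^ 3 + s ^ 6)
      ≤ 33 / 5 * (8 * ((N : ℝ) - 4) * (N - 6)) * (1 - 19 / 10 * s ^ 3 + s ^ 6) := by gcongr
    _ = 8 * ((N : ℝ) - 4) * (N - 6) * (33 / 5 * (1 - 19 / 10 * s ^ 3 + s ^ 6)) := by ring
    _ < _ := by gcongr

/-- `w` is a subsolution with parameter `lamP`. -/
theorem w_sub {N : ℕ} (hN : 9 ≤ N) {ρ : ℝ} (h : ρ ∈ Ioc (0 : ℝ) 1) :
    2 * lamBar N * ρ ^ (-4 / 3 : ℝ) + KK N * ρ ^ (-2 / 3 : ℝ) ≤ lamP N / (om ρ) ^ 2 := by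
  have hN' : (9 : ℝ) ≤ N := by exact_mod_cast hN
  obtain ⟨s, hs, hs3, hk⟩ := exists_cube h
  have hm4 := hk (-4)
  have hm2 := hk (-2)
  push_cast at hm4 hm2
  have hs0 := hs.1
  have h2s : 0 < 2 - s ^ 2 := by nlinarith [hs.1, hs.2]
  have hlb := lamBar_pos hN
  have e4 : s ^ (-4 : ℤ) = (s ^ 4)⁻¹ := by rw [zpow_neg]; norm_cast
  have e2 : s ^ (-2 : ℤ) = (s ^ 2)⁻¹ := by rw [zpow_neg]; norm_cast
  have hK : KK N ≤ 281 / 100 * lamBar N := by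
    unfold KK lamBar; nlinarith
  rw [hm4, hm2, om_eq hk, e4, e2, lamP]
  have hp := poly_ineq2 (t := s ^ 2) (by positivity) (by nlinarith [hs.2])
  calc 2 * lamBar N * (s ^ 4)⁻¹ + KK N * (s ^ 2)⁻¹
      ≤ 2 * lamBar N * (s ^ 4)⁻¹ + 281 / 100 * lamBar N * (s ^ 2)⁻¹ := by gcongr
    _ = lamBar N * ((2 + 281 / 100 * s ^ 2) * (2 - s ^ 2) ^ 2) / (s ^ 2 * (2 - s ^ 2)) ^ 2 := by
        field_simp
    _ ≤ lamBar N * (42 / 5) / (s ^ 2 * (2 - s ^ 2)) ^ 2 := by gcongr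
    _ = _ := by ring

/-- The Hardy potential of `1 - r^{4/3}` is below `V`. -/
theorem hardy_le_VV {N : ℕ} (hN : 9 ≤ N) {ρ : ℝ} (h : ρ ∈ Ioc (0 : ℝ) 1) :
    2 * lamBar N / (ρ ^ (2 / 3 : ℝ)) ^ 3 ≤ VV N ρ := by
  obtain ⟨s, hs, hs3, hk⟩ := exists_cube h
  have hm2 := hk 2
  push_cast at hm2
  have e2 : s ^ (2 : ℤ) = s ^ 2 := by norm_cast
  have hs0 := hs.1
  have h2s : 0 < 2 - s ^ 2 := by nlinarith [hs.1, hs.2]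
  have hlb := lamBar_pos hN
  rw [hm2, VV, om_eq hk, lamP, e2, div_le_div_iff₀ (by positivity) (by positivity)]
  have : (2 - s ^ 2) ^ 3 ≤ 2 ^ 3 := by gcongr; nlinarith
  calc 2 * lamBar N * (s ^ 2 * (2 - s ^ 2)) ^ 3 = 2 * lamBar N * (s ^ 2) ^ 3 * (2 - s ^ 2) ^ 3 := by
        ring
    _ ≤ 2 * lamBar N * (s ^ 2) ^ 3 * 2 ^ 3 := by gcongr
    _ ≤ _ := by nlinarith [mul_pos hlb (pow_pos hs0 6)]

theorem rad_pow23 (N : ℕ) (C : ℝ) : Rad N (fun ρ => 1 - C * ρ ^ (2 / 3 : ℝ))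
    (fun ρ => - (C * (2 / 3) * ρ ^ (-1 / 3 : ℝ))) (fun ρ => C * lamBar N * ρ ^ (-4 / 3 : ℝ)) := by
  refine ((rad_rpow N (k := 0) (by norm_num)).lin
    (rad_rpow N (k := 2 / 3) (by norm_num)) 1 (-C)).congr ?_ ?_ ?_
  · intro ρ _; simp; ring
  · intro ρ _; norm_num; ring
  · intro ρ _; norm_num [lamBar]; ring

theorem rad_w (N : ℕ) (a : ℝ) : Rad N (fun ρ => 1 - a * om ρ)
    (fun ρ => - (a * om1 ρ))
    (fun ρ => a * (2 * lamBar N * ρ ^ (-4 / 3 : ℝ) + KK N * ρ ^ (-2 / 3 : ℝ))) := by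
  refine ((rad_pow23 N (2 * a)).lin
    (rad_rpow N (k := 4 / 3) (by norm_num)) 1 a).congr ?_ ?_ ?_
  · intro ρ _; simp [om]; ring
  · intro ρ _; norm_num [om1]; ring
  · intro ρ _; norm_num [lamBar, KK]; ring

theorem rad_chi (N : ℕ) : Rad N chi chi1
    (fun ρ => 8 * ((N : ℝ) - 4) * (N - 6) * ρ ^ (-3 : ℝ)) := by
  refine (((rad_rpow N (k := -1) (by norm_num)).lin
    (rad_rpow N (k := 0) (by norm_num)) 1 (-19 / 10)).lin
    (rad_rpow N (k := 1) (by norm_num)) 1 1).congr ?_ ?_ ?_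
  · intro ρ _; simp [chi]; ring
  · intro ρ _; norm_num [chi1]
  · intro ρ _; norm_num; left; ring

theorem chi_eq {ρ : ℝ} (h : 0 < ρ) : chi ρ = (1 - 19 / 10 * ρ + ρ ^ 2) / ρ := by
  unfold chi; rw [Real.rpow_neg_one]; field_simp

theorem chi_num_pos (ρ : ℝ) : 0 < 1 - 19 / 10 * ρ + ρ ^ 2 := by
  nlinarith [sq_nonneg (ρ - 19 / 20)]

theorem chi_pos {ρ : ℝ} (h : 0 < ρ) : 0 < chi ρ := by
  rw [chi_eq h]; exact div_pos (chi_num_pos ρ) h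

theorem chi_cont : ContinuousOn chi (Ioi 0) := by
  unfold chi
  refine ((ContinuousOn.rpow_const continuousOn_id fun x hx => Or.inl (ne_of_gt hx)).sub
    continuousOn_const).add continuousOn_id

theorem chi1_cont : ContinuousOn chi1 (Ioi 0) := by
  unfold chi1
  exact ((ContinuousOn.rpow_const continuousOn_id fun x hx => Or.inl (ne_of_gt hx)).neg).add
    continuousOn_const

theorem chi1_nonpos {ρ : ℝ} (h : ρ ∈ Ioc (0 : ℝ) 1) : chi1 ρ ≤ 0 := by
  unfold chi1
  have := Real.one_le_rpow_of_pos_of_le_one_of_nonpos h.1 h.2 (z := -2) (by norm_num)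
  linarith

/-- Comparison principle. -/
theorem rad_cmp {N : ℕ} (hN : 9 ≤ N) {R : ℝ} (hR0 : 0 < R) (hR : R ≤ 1) {φ φ1 f : ℝ → ℝ}
    (h : Rad N φ φ1 f)
    (hc : ContinuousOn φ (Ioc 0 R)) (hc1 : ContinuousOn φ1 (Ioc 0 R)) (h0 : φ R = 0)
    (h1 : 0 ≤ φ1 R) (hz : Tendsto (fun ρ => ρ * φ ρ) (𝓝[>] 0) (𝓝 0))
    (hf : ∀ ρ ∈ Ioo (0 : ℝ) R, f ρ ≤ VV N ρ * max (φ ρ) 0) : ∀ ρ ∈ Ioc (0 : ℝ) R, φ ρ ≤ 0 := by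
  by_contra hcon
  push Not at hcon
  obtain ⟨ρ0, hρ0, hpos⟩ := hcon
  set q : ℝ → ℝ := fun ρ => φ ρ / chi ρ with hq
  have hq0 : 0 < q ρ0 := div_pos hpos (chi_pos hρ0.1)
  have hqlim : Tendsto q (𝓝[>] 0) (𝓝 0) := by
    have h2 : Tendsto (fun ρ : ℝ => ρ * φ ρ / (1 - 19 / 10 * ρ + ρ ^ 2)) (𝓝[>] 0) (𝓝 (0 / 1)) := by
      refine hz.div ?_ one_ne_zero
      have : ContinuousAt (fun ρ : ℝ => 1 - 19 / 10 * ρ + ρ ^ 2) 0 := by fun_prop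
      have := this.tendsto
      norm_num at this
      exact this.mono_left nhdsWithin_le_nhds
    rw [zero_div] at h2
    refine h2.congr' ?_
    filter_upwards [self_mem_nhdsWithin] with x hx
    have hx : 0 < x := hx
    simp only [hq]
    rw [chi_eq hx]
    field_simp
  have hev := hqlim.eventually (gt_mem_nhds hq0)
  obtain ⟨ε, hε, hεq⟩ := mem_nhdsGT_iff_exists_Ioo_subset.1 hev
  have hε : 0 < ε := hε
  set a := min (ε / 2) ρ0 with ha
  have ha0 : 0 < a := lt_min (by linarith) hρ0.1
  have hqc : ContinuousOn q (Icc a R) := by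
    refine ContinuousOn.div (hc.mono fun x hx => ⟨ha0.trans_le hx.1, hx.2⟩)
      (chi_cont.mono fun x hx => ha0.trans_le hx.1) fun x hx => (chi_pos (ha0.trans_le hx.1)).ne'
  obtain ⟨m, hm, hmax⟩ := isCompact_Icc.exists_isMaxOn
    ⟨ρ0, min_le_right _ _, hρ0.2⟩ hqc
  have hall : ∀ ρ ∈ Ioc (0 : ℝ) R, q ρ ≤ q m := by
    intro ρ hρ
    have h3 : q ρ0 ≤ q m := hmax ⟨min_le_right _ _, hρ0.2⟩
    rcases le_or_gt a ρ with h | h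
    · exact hmax ⟨h, hρ.2⟩
    · have h4 : q ρ < q ρ0 := hεq ⟨hρ.1, by
        have := min_le_left (ε / 2) ρ0
        linarith⟩
      linarith
  have hκ : 0 < q m := hq0.trans_le (hall ρ0 hρ0)
  set κ := q m with hκd
  have hm0 : 0 < m := ha0.trans_le hm.1
  have hmR : m < R := by
    refine lt_of_le_of_ne hm.2 fun he => ?_
    rw [hκd, he] at hκ
    simp only [hq, h0, zero_div, lt_irrefl] at hκ
  have hle : ∀ ρ ∈ Ioc (0 : ℝ) R, φ ρ ≤ κ * chi ρ := by
    intro ρ hρ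
    have := hall ρ hρ
    rwa [div_le_iff₀ (chi_pos hρ.1)] at this
  have hb := ((rad_chi N).lin h κ (-1)).boggio hN hR (R := R) ?_ ?_ ?_ ?_ m ⟨hm0, hmR⟩
  · have e : φ m = κ * chi m := by
      rw [hκd]; simp only [hq]; rw [div_mul_cancel₀ _ (chi_pos hm0).ne']
    rw [h0, e] at hb
    have := mul_pos hκ (chi_pos hR0)
    linarith
  · intro ρ hρ
    have h5 := VV_chi hN (ρ := ρ) ⟨hρ.1, hρ.2.le.trans hR⟩
    have h6 := hf ρ hρ
    have h7 : max (φ ρ) 0 ≤ κ * chi ρ := max_le (hle ρ ⟨hρ.1, hρ.2.le⟩)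
      (mul_pos hκ (chi_pos hρ.1)).le
    have h8 := mul_le_mul_of_nonneg_left h7 (VV_pos hN (ρ := ρ) ⟨hρ.1, hρ.2.le.trans hR⟩).le
    have h9 := mul_lt_mul_of_pos_left h5 hκ
    nlinarith
  · exact (ContinuousOn.const_smul (chi_cont.mono fun x hx => hx.1) κ).add
      (ContinuousOn.const_smul hc (-1 : ℝ))
  · exact (ContinuousOn.const_smul (chi1_cont.mono fun x hx => hx.1) κ).add
      (ContinuousOn.const_smul hc1 (-1 : ℝ))
  · have := mul_nonpos_of_nonneg_of_nonpos hκ.le (chi1_nonpos ⟨hR0, hR⟩)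
    linarith

/-- Crossing lemma. -/
theorem crossing {N : ℕ} (hN : 9 ≤ N) {φ φ1 f : ℝ → ℝ}
    (h : Rad N φ φ1 f) (hc : ContinuousOn φ (Ioc 0 1))
    (hz : Tendsto (fun ρ => ρ * φ ρ) (𝓝[>] 0) (𝓝 0))
    (hf : ∀ ρ ∈ Ioo (0 : ℝ) 1, f ρ ≤ VV N ρ * max (φ ρ) 0) {r0 r1 : ℝ} (hr0 : 0 < r0)
    (h01 : r0 < r1) (hr1 : r1 ≤ 1) (hn : φ r0 ≤ 0) (hp : 0 < φ r1) :
    ∀ ρ ∈ Ioc (0 : ℝ) r0, φ ρ ≤ 0 := by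
  -- last zero
  have hcI : ContinuousOn φ (Icc r0 r1) := hc.mono fun x hx => ⟨hr0.trans_le hx.1, hx.2.trans hr1⟩
  set S := {x ∈ Icc r0 r1 | φ x ≤ 0} with hS
  have hSne : S.Nonempty := ⟨r0, ⟨le_rfl, h01.le⟩, hn⟩
  have hScl : IsClosed S := by
    have := hcI.preimage_isClosed_of_isClosed isClosed_Icc (isClosed_Iic (a := (0 : ℝ)))
    exact this
  have hSbd : BddAbove S := ⟨r1, fun x hx => hx.1.2⟩
  obtain ⟨⟨hR0, hR1⟩, hRn⟩ : sSup S ∈ S := hScl.csSup_mem hSne hSbd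
  set R := sSup S with hR
  have hRlt : R < r1 := lt_of_le_of_ne hR1 fun he => by rw [he] at hRn; linarith
  have hpos : ∀ x ∈ Ioc R r1, 0 < φ x := by
    intro x hx
    by_contra hcon
    push Not at hcon
    have := le_csSup hSbd (show x ∈ S from ⟨⟨hR0.trans hx.1.le, hx.2⟩, hcon⟩)
    exact absurd hx.1 (not_lt.2 this)
  have hRpos : 0 < R := hr0.trans_le hR0
  have hR1' : R < 1 := hRlt.trans_le hr1
  have hd : ∀ x ∈ Ioo (0 : ℝ) 1, HasDerivAt φ (φ1 x) x ∧ ContinuousAt φ1 x := by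
    obtain ⟨φ2, φ3, φ4, a, -⟩ := h
    exact fun x hx => ⟨(a x hx).1, (a x hx).2.1.continuousAt⟩
  have hRz : φ R = 0 := by
    refine le_antisymm hRn ?_
    have h2 : Tendsto φ (𝓝[>] R) (𝓝 (φ R)) :=
      (hd R ⟨hRpos, hR1'⟩).1.continuousAt.tendsto.mono_left nhdsWithin_le_nhds
    refine ge_of_tendsto h2 ?_
    filter_upwards [Ioo_mem_nhdsGT hRlt] with x hx
    exact (hpos x ⟨hx.1, hx.2.le⟩).le
  have hd1 : 0 ≤ φ1 R := by
    have h2 := (hd R ⟨hRpos, hR1'⟩).1.hasDerivWithinAt (s := Ioi R)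
    rw [hasDerivWithinAt_iff_tendsto_slope' (by simp)] at h2
    refine ge_of_tendsto h2 ?_
    filter_upwards [Ioo_mem_nhdsGT hRlt] with x hx
    rw [slope_def_field, hRz, sub_zero]
    exact div_nonneg (hpos x ⟨hx.1, hx.2.le⟩).le (by linarith [hx.1])
  have := rad_cmp hN hRpos hR1'.le h (hc.mono (Ioc_subset_Ioc_right hR1'.le))
    (fun x hx => (hd x ⟨hx.1, hx.2.trans_lt hR1'⟩).2.continuousWithinAt) hRz hd1 hz
    (fun x hx => hf x ⟨hx.1, hx.2.trans hR1'⟩)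
  exact fun x hx => this x ⟨hx.1, hx.2.trans hR0⟩

/-- Radial classical solution profile, in the variable `ρ = |x|^2`. -/
structure RSol (N : ℕ) (lam : ℝ) (W W1 : ℝ → ℝ) (u0 : ℝ) : Prop where
  rad : Rad N W W1 (fun ρ => lam / (1 - W ρ) ^ 2)
  lam_pos : 0 < lam
  cont : ContinuousOn W (Ioc 0 1)
  cont1 : ContinuousOn W1 (Ioc 0 1)
  one : W 1 = 0
  one1 : W1 1 = 0
  pos : ∀ ρ ∈ Ioo (0 : ℝ) 1, 0 < W ρ
  lt : ∀ ρ ∈ Ioo (0 : ℝ) 1, W ρ < 1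
  zero : Tendsto W (𝓝[>] 0) (𝓝 u0)
  zero_lt : u0 < 1

theorem hz_of_tendsto {φ : ℝ → ℝ} {c : ℝ} (h : Tendsto φ (𝓝[>] 0) (𝓝 c)) :
    Tendsto (fun ρ => ρ * φ ρ) (𝓝[>] 0) (𝓝 0) := by
  have h1 : Tendsto (fun ρ : ℝ => ρ) (𝓝[>] 0) (𝓝 0) := nhdsWithin_le_nhds
  simpa using h1.mul h

theorem rpow_lim {k : ℝ} (hk : 0 < k) : Tendsto (fun ρ : ℝ => ρ ^ k) (𝓝[>] 0) (𝓝 0) := by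
  have : ContinuousAt (fun x : ℝ => x ^ k) 0 :=
    Real.continuousAt_rpow_const _ _ (Or.inr hk.le)
  have h2 := this.tendsto
  rw [Real.zero_rpow hk.ne'] at h2
  exact h2.mono_left nhdsWithin_le_nhds

theorem rpow_cont (k : ℝ) : ContinuousOn (fun ρ : ℝ => ρ ^ k) (Ioi 0) :=
  ContinuousOn.rpow_const continuousOn_id fun _ hx => Or.inl (ne_of_gt hx)

theorem om_lim : Tendsto om (𝓝[>] 0) (𝓝 0) := by
  have := ((rpow_lim (k := 2 / 3) (by norm_num)).const_mul 2).sub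
    (rpow_lim (k := 4 / 3) (by norm_num))
  rw [mul_zero, sub_zero] at this
  exact this

theorem om_cont : ContinuousOn om (Ioi 0) :=
  (ContinuousOn.const_smul (rpow_cont (2 / 3)) (2 : ℝ)).sub (rpow_cont (4 / 3))

theorem om1_cont : ContinuousOn om1 (Ioi 0) :=
  (ContinuousOn.const_smul (rpow_cont (-1 / 3)) (4 / 3 : ℝ)).sub
    (ContinuousOn.const_smul (rpow_cont (1 / 3)) (4 / 3 : ℝ))

theorem f_bound {lam A B V : ℝ} (hl : 0 < lam) (hA : 0 < A) (hB : 0 < B)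
    (hV : 2 * lam / A ^ 3 ≤ V) : lam / A ^ 2 - lam / B ^ 2 ≤ V * max (B - A) 0 := by
  rcases le_total B A with h | h
  · rw [max_eq_right (by linarith)]
    have : lam / A ^ 2 ≤ lam / B ^ 2 := by gcongr
    linarith
  · rw [max_eq_left (by linarith)]
    refine le_trans ?_ (mul_le_mul_of_nonneg_right hV (by linarith))
    rw [← sub_nonneg]
    have : 2 * lam / A ^ 3 * (B - A) - (lam / A ^ 2 - lam / B ^ 2) =
        lam * ((B - A) ^ 2 * (2 * B + A)) / (A ^ 3 * B ^ 2) := by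
      field_simp; ring
    rw [this]; positivity

theorem lim_nonpos {φ : ℝ → ℝ} {c r : ℝ} (h : Tendsto φ (𝓝[>] 0) (𝓝 c)) (hr : 0 < r)
    (hn : ∀ ρ ∈ Ioc (0 : ℝ) r, φ ρ ≤ 0) : c ≤ 0 := by
  refine le_of_tendsto h ?_
  filter_upwards [Ioc_mem_nhdsGT hr] with x hx
  exact hn x hx

section
variable {N : ℕ} {lam u0 : ℝ} {W W1 : ℝ → ℝ}

theorem RSol.lam_lt (hN : 9 ≤ N) (h : RSol N lam W W1 u0) : lam < lamP N := by
  by_contra hcon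
  push Not at hcon
  have hlim : Tendsto (fun ρ => (1 - 1 * om ρ) - W ρ) (𝓝[>] 0) (𝓝 (1 - 1 * 0 - u0)) :=
    (tendsto_const_nhds.sub (om_lim.const_mul 1)).sub h.zero
  have := rad_cmp hN one_pos le_rfl ((rad_w N 1).sub h.rad)
    ((continuousOn_const.sub (ContinuousOn.const_smul (om_cont.mono fun x hx => hx.1)
      (1 : ℝ))).sub h.cont)
    ((ContinuousOn.const_smul (om1_cont.mono fun x hx => hx.1) (1 : ℝ)).neg.sub h.cont1)
    (by rw [om_one, h.one]; norm_num) (by rw [om1_one, h.one1]; norm_num)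
    (hz_of_tendsto hlim) ?_
  · have := lim_nonpos hlim one_pos this
    linarith [h.zero_lt]
  · intro ρ hρ
    have h1 := w_sub hN (ρ := ρ) ⟨hρ.1, hρ.2.le⟩
    have hom := om_pos (ρ := ρ) ⟨hρ.1, hρ.2.le⟩
    have hW := h.lt ρ hρ
    have h2 := f_bound (lam := lamP N) (A := om ρ) (B := 1 - W ρ) (V := VV N ρ) (lamP_pos hN)
      hom (by linarith) le_rfl
    have h3 : lamP N / (1 - W ρ) ^ 2 ≤ lam / (1 - W ρ) ^ 2 := by gcongr
    have h4 : 1 - 1 * om ρ - W ρ = 1 - W ρ - om ρ := by ring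
    rw [h4]; linarith

theorem RSol.stab (hN : 9 ≤ N) (h : RSol N lam W W1 u0) :
    ∀ ρ ∈ Ioo (0 : ℝ) 1, 2 * lam / (1 - W ρ) ^ 3 ≤ VV N ρ := by
  have hl := h.lam_lt hN
  have hl0 := h.lam_pos
  have hP := lamP_pos hN
  obtain ⟨α, hα0, hα3⟩ : ∃ α : ℝ, 0 < α ∧ α ^ 3 = lam / lamP N := by
    refine ⟨(lam / lamP N) ^ (1 / 3 : ℝ), by positivity, ?_⟩
    rw [← Real.rpow_natCast, ← Real.rpow_mul (by positivity)]; norm_num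
  have hα1 : α < 1 := by
    by_contra hcon
    push Not at hcon
    have h1 : 1 ≤ α ^ 3 := one_le_pow₀ hcon
    rw [hα3, le_div_iff₀ hP] at h1
    linarith
  have hlam : lam = α ^ 3 * lamP N := by rw [hα3]; field_simp
  have hlim : Tendsto (fun ρ => (1 - α * om ρ) - W ρ) (𝓝[>] 0) (𝓝 (1 - α * 0 - u0)) :=
    (tendsto_const_nhds.sub (om_lim.const_mul α)).sub h.zero
  have hf : ∀ ρ ∈ Ioo (0 : ℝ) 1, α * (2 * lamBar N * ρ ^ (-4 / 3 : ℝ) + KK N * ρ ^ (-2 / 3 : ℝ)) -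
      lam / (1 - W ρ) ^ 2 ≤ VV N ρ * max (1 - α * om ρ - W ρ) 0 := by
    intro ρ hρ
    have h1 := mul_le_mul_of_nonneg_left (w_sub hN (ρ := ρ) ⟨hρ.1, hρ.2.le⟩) hα0.le
    have hom := om_pos (ρ := ρ) ⟨hρ.1, hρ.2.le⟩
    have hW := h.lt ρ hρ
    have h2 := f_bound (lam := lam) (A := α * om ρ) (B := 1 - W ρ) (V := VV N ρ) hl0
      (by positivity) (by linarith) (by
        rw [hlam, VV]; apply le_of_eq; field_simp)
    have h3 : α * (lamP N / om ρ ^ 2) = lam / (α * om ρ) ^ 2 := by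
      rw [hlam]; field_simp
    have h4 : 1 - α * om ρ - W ρ = 1 - W ρ - α * om ρ := by ring
    rw [h4]; linarith
  intro ρ hρ
  have hpos : 0 < 1 - α * om ρ - W ρ := by
    by_contra hcon
    push Not at hcon
    have := crossing hN ((rad_w N α).sub h.rad)
      ((continuousOn_const.sub (ContinuousOn.const_smul (om_cont.mono fun x hx => hx.1)
        (α : ℝ))).sub h.cont) (hz_of_tendsto hlim) hf hρ.1 hρ.2 le_rfl hcon
        (by rw [om_one, h.one]; linarith)
    have := lim_nonpos hlim hρ.1 this
    linarith [h.zero_lt]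
  have hom := om_pos (ρ := ρ) ⟨hρ.1, hρ.2.le⟩
  have : VV N ρ = 2 * lam / (α * om ρ) ^ 3 := by
    rw [hlam, VV]; field_simp
  rw [this]
  gcongr
  linarith

theorem pow_aux {ρ : ℝ} (h : 0 < ρ) : ρ ^ (-4 / 3 : ℝ) = 1 / (ρ ^ (2 / 3 : ℝ)) ^ 2 := by
  rw [← Real.rpow_natCast, ← Real.rpow_mul h.le, one_div, ← Real.rpow_neg h.le]; norm_num

theorem RSol.upper (hN : 9 ≤ N) (h : RSol N lam W W1 u0) (hl : lamBar N ≤ lam) :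
    ∀ ρ ∈ Ioo (0 : ℝ) 1, W ρ < 1 - ρ ^ (2 / 3 : ℝ) := by
  have hlim : Tendsto (fun ρ : ℝ => (1 - 1 * ρ ^ (2 / 3 : ℝ)) - W ρ) (𝓝[>] 0)
      (𝓝 (1 - 1 * 0 - u0)) :=
    (tendsto_const_nhds.sub ((rpow_lim (by norm_num)).const_mul 1)).sub h.zero
  have hrad := (rad_pow23 N 1).sub h.rad
  have hc : ContinuousOn (fun ρ : ℝ => (1 - 1 * ρ ^ (2 / 3 : ℝ)) - W ρ) (Ioc 0 1) :=
    (continuousOn_const.sub (ContinuousOn.const_smul ((rpow_cont _).mono fun x hx => hx.1)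
      (1 : ℝ))).sub h.cont
  have hc1 : ContinuousOn (fun ρ : ℝ => - (1 * (2 / 3) * ρ ^ (-1 / 3 : ℝ)) - W1 ρ) (Ioc 0 1) :=
    (ContinuousOn.const_smul ((rpow_cont _).mono fun x hx => hx.1) (1 * (2 / 3) : ℝ)).neg.sub
      h.cont1
  -- positivity near one
  obtain ⟨d, hd1, hd⟩ : ∃ d < (1 : ℝ), ∀ ρ ∈ Ioo d 1, 0 < (1 - 1 * ρ ^ (2 / 3 : ℝ)) - W ρ := by
    have h1 : Tendsto (fun ρ : ℝ => - (1 * (2 / 3) * ρ ^ (-1 / 3 : ℝ)) - W1 ρ) (𝓝[Ioc 0 1] 1)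
        (𝓝 (- (1 * (2 / 3) * 1 ^ (-1 / 3 : ℝ)) - W1 1)) := hc1 1 ⟨one_pos, le_rfl⟩
    have h2 := h1.eventually_lt_const (u := 0) (by rw [h.one1]; norm_num)
    have h3 : 𝓝[Ioc 0 1] (1 : ℝ) = 𝓝[≤] 1 := nhdsWithin_Ioc_eq_nhdsLE one_pos
    rw [h3] at h2
    obtain ⟨d, hd, hd'⟩ := mem_nhdsLE_iff_exists_Ioc_subset.1 h2
    have hd : d < 1 := hd
    refine ⟨max d 0, max_lt hd one_pos, fun ρ hρ => ?_⟩
    have hρ0 : 0 < ρ := (le_max_right d 0).trans_lt hρ.1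
    have hρd : d < ρ := (le_max_left d 0).trans_lt hρ.1
    have hanti : StrictAntiOn (fun ρ : ℝ => (1 - 1 * ρ ^ (2 / 3 : ℝ)) - W ρ) (Icc ρ 1) := by
      apply strictAntiOn_of_deriv_neg (convex_Icc _ _)
        (hc.mono fun x hx => ⟨hρ0.trans_le hx.1, hx.2⟩)
      rw [interior_Icc]
      intro x hx
      obtain ⟨φ2, φ3, φ4, a, -⟩ := hrad
      have := (a x ⟨hρ0.trans hx.1, hx.2⟩).1
      rw [this.deriv]
      exact hd' ⟨hρd.trans hx.1, hx.2.le⟩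
    have := hanti ⟨le_rfl, hρ.2.le⟩ ⟨hρ.2.le, le_rfl⟩ hρ.2
    simp only [h.one] at this
    norm_num at this ⊢
    linarith
  have hf : ∀ ρ ∈ Ioo (0 : ℝ) 1, 1 * lamBar N * ρ ^ (-4 / 3 : ℝ) -
      lam / (1 - W ρ) ^ 2 ≤ VV N ρ * max (1 - 1 * ρ ^ (2 / 3 : ℝ) - W ρ) 0 := by
    intro ρ hρ
    have hW := h.lt ρ hρ
    have hρ0 := hρ.1
    have h2 := f_bound (lam := lamBar N) (A := ρ ^ (2 / 3 : ℝ)) (B := 1 - W ρ) (V := VV N ρ)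
      (lamBar_pos hN) (by positivity) (by linarith) (hardy_le_VV hN ⟨hρ.1, hρ.2.le⟩)
    have h3 : lamBar N / (1 - W ρ) ^ 2 ≤ lam / (1 - W ρ) ^ 2 := by gcongr
    have h4 : 1 - 1 * ρ ^ (2 / 3 : ℝ) - W ρ = 1 - W ρ - ρ ^ (2 / 3 : ℝ) := by ring
    have h5 : 1 * lamBar N * ρ ^ (-4 / 3 : ℝ) = lamBar N / (ρ ^ (2 / 3 : ℝ)) ^ 2 := by
      rw [pow_aux hρ0]; ring
    rw [h4, h5]; linarith
  intro ρ hρ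
  by_contra hcon
  push Not at hcon
  obtain ⟨r1, hr1, hr1'⟩ := exists_between (max_lt hd1 hρ.2)
  have := crossing hN hrad hc (hz_of_tendsto hlim) hf hρ.1 ((le_max_right _ _).trans_lt hr1)
    hr1'.le (by linarith) (hd r1 ⟨(le_max_left _ _).trans_lt hr1, hr1'⟩)
  have := lim_nonpos hlim hρ.1 this
  linarith [h.zero_lt]

theorem RSol.X3f (hN : 9 ≤ N) (h : RSol N lam W W1 u0) {C : ℝ} (hC : 1 ≤ C)
    (hl : lam ≤ C ^ 3 * lamBar N) :
    ∀ ρ ∈ Ioo (0 : ℝ) 1, lam / (1 - W ρ) ^ 2 - C * lamBar N * ρ ^ (-4 / 3 : ℝ)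
      ≤ VV N ρ * max (W ρ - (1 - C * ρ ^ (2 / 3 : ℝ))) 0 := by
  intro ρ hρ
  have hW := h.lt ρ hρ
  have hρ0 := hρ.1
  have hC0 : 0 < C := by linarith
  have h2 := f_bound (lam := lam) (A := 1 - W ρ) (B := C * ρ ^ (2 / 3 : ℝ)) (V := VV N ρ)
    h.lam_pos (by linarith) (by positivity) (h.stab hN ρ hρ)
  have h3 : lam / (C * ρ ^ (2 / 3 : ℝ)) ^ 2 ≤ C ^ 3 * lamBar N / (C * ρ ^ (2 / 3 : ℝ)) ^ 2 := by
    gcongr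
  have h5 : C * lamBar N * ρ ^ (-4 / 3 : ℝ) = C ^ 3 * lamBar N / (C * ρ ^ (2 / 3 : ℝ)) ^ 2 := by
    rw [pow_aux hρ0]; field_simp
  have h4 : W ρ - (1 - C * ρ ^ (2 / 3 : ℝ)) = C * ρ ^ (2 / 3 : ℝ) - (1 - W ρ) := by ring
  rw [h4, h5]; linarith

theorem RSol.X3a (hN : 9 ≤ N) (h : RSol N lam W W1 u0) {C : ℝ} (hC : 1 < C)
    (hl : lam ≤ C ^ 3 * lamBar N) {r0 : ℝ} (hr0 : r0 ∈ Ioo (0 : ℝ) 1)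
    (hW : W r0 ≤ 1 - C * r0 ^ (2 / 3 : ℝ)) :
    ∀ ρ ∈ Ioc (0 : ℝ) r0, W ρ ≤ 1 - C * ρ ^ (2 / 3 : ℝ) := by
  have hlim : Tendsto (fun ρ : ℝ => W ρ - (1 - C * ρ ^ (2 / 3 : ℝ))) (𝓝[>] 0)
      (𝓝 (u0 - (1 - C * 0))) :=
    h.zero.sub (tendsto_const_nhds.sub ((rpow_lim (by norm_num)).const_mul C))
  have := crossing hN (h.rad.sub (rad_pow23 N C)) (h.cont.sub (continuousOn_const.sub
    (ContinuousOn.const_smul ((rpow_cont _).mono fun x hx => hx.1) C))) (hz_of_tendsto hlim)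
    (h.X3f hN hC.le hl) hr0.1 hr0.2 le_rfl (by linarith) (by rw [h.one]; norm_num; linarith)
  intro ρ hρ
  linarith [this ρ hρ]

theorem RSol.X3b (hN : 9 ≤ N) (h : RSol N lam W W1 u0)
    (hl : lam ≤ lamBar N) :
    ∀ ρ ∈ Ioc (0 : ℝ) 1, W ρ ≤ 1 - ρ ^ (2 / 3 : ℝ) := by
  have hlim : Tendsto (fun ρ : ℝ => W ρ - (1 - 1 * ρ ^ (2 / 3 : ℝ))) (𝓝[>] 0)
      (𝓝 (u0 - (1 - 1 * 0))) :=
    h.zero.sub (tendsto_const_nhds.sub ((rpow_lim (by norm_num)).const_mul 1))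
  have := rad_cmp hN one_pos le_rfl (h.rad.sub (rad_pow23 N 1)) (h.cont.sub
    (continuousOn_const.sub
    (ContinuousOn.const_smul ((rpow_cont _).mono fun x hx => hx.1) (1 : ℝ))))
    (h.cont1.sub (ContinuousOn.const_smul ((rpow_cont _).mono fun x hx => hx.1)
      (1 * (2 / 3) : ℝ)).neg) (by rw [h.one]; norm_num) (by rw [h.one1]; norm_num)
      (hz_of_tendsto hlim)
    (h.X3f hN le_rfl (by linarith))
  intro ρ hρ
  linarith [this ρ hρ]

theorem RSol.le_of_same (hN : 9 ≤ N) (h : RSol N lam W W1 u0) {V V1 : ℝ → ℝ} {v0 : ℝ}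
    (k : RSol N lam V V1 v0) : ∀ ρ ∈ Ioc (0 : ℝ) 1, W ρ ≤ V ρ := by
  have hlim := h.zero.sub k.zero
  have := rad_cmp hN one_pos le_rfl (h.rad.sub k.rad) (h.cont.sub k.cont)
    (h.cont1.sub k.cont1) (by rw [h.one, k.one]; norm_num) (by rw [h.one1, k.one1]; norm_num)
      (hz_of_tendsto hlim) ?_
  · intro ρ hρ
    linarith [this ρ hρ]
  · intro ρ hρ
    have hW := h.lt ρ hρ
    have hV := k.lt ρ hρ
    have h2 := f_bound (lam := lam) (A := 1 - W ρ) (B := 1 - V ρ) (V := VV N ρ)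
      h.lam_pos (by linarith) (by linarith) (h.stab hN ρ hρ)
    have h4 : W ρ - V ρ = 1 - V ρ - (1 - W ρ) := by ring
    rw [h4]; exact h2

theorem RSol.convex_bound (hN : 9 ≤ N) (h : RSol N lam W W1 u0) {C r : ℝ} (hC : 0 < C)
    (hr : r ∈ Ioc (0 : ℝ) 1) (hW : ∀ ρ ∈ Ioo (0 : ℝ) r, C * ρ ^ (2 / 3 : ℝ) ≤ 1 - W ρ) :
    ∀ ρ ∈ Ioo (0 : ℝ) (r / 2),
      (C - lam / (C ^ 2 * lamBar N)) * ρ ^ (2 / 3 : ℝ) ≤ (1 - u0) + 2 / r * ρ := by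
  set c := lam / (C ^ 2 * lamBar N) with hc
  have hlb := lamBar_pos hN
  have hlam := h.lam_pos
  have hc0 : 0 < c := by positivity
  have hconv := ((rad_pow23 N c).sub h.rad).convexOn hN hr.2 (R := r) (by
    intro ρ hρ
    have hρ0 := hρ.1
    have h1 := hW ρ hρ
    have h2 : lam / (1 - W ρ) ^ 2 ≤ lam / (C * ρ ^ (2 / 3 : ℝ)) ^ 2 := by gcongr
    have h5 : c * lamBar N * ρ ^ (-4 / 3 : ℝ) = lam / (C * ρ ^ (2 / 3 : ℝ)) ^ 2 := by
      rw [pow_aux hρ0, hc]; field_simp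
    rw [h5]; linarith)
  have hlim : Tendsto (fun ρ : ℝ => 1 - c * ρ ^ (2 / 3 : ℝ) - W ρ) (𝓝[>] 0)
      (𝓝 ((1 - c * 0) - u0)) :=
    (tendsto_const_nhds.sub ((rpow_lim (by norm_num)).const_mul c)).sub h.zero
  set ψ : ℝ → ℝ := fun ρ : ℝ => 1 - c * ρ ^ (2 / 3 : ℝ) - W ρ with hψ
  have hr0 := hr.1
  intro ρ hρ
  have hρ0 := hρ.1
  have hs : r / 2 ∈ Ioo (0 : ℝ) r := ⟨by linarith, by linarith⟩
  have hψs : ψ (r / 2) ≤ 1 := by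
    have h1 := h.pos (r / 2) ⟨hs.1, hs.2.trans_le hr.2⟩
    have h2 : 0 ≤ c * (r / 2) ^ (2 / 3 : ℝ) := by positivity
    simp only [hψ]; linarith
  have key : ψ ρ ≤ (1 - ρ / (r / 2)) * (1 - c * 0 - u0) + ρ / (r / 2) * ψ (r / 2) := by
    have hR : Tendsto (fun ε : ℝ => (1 - (ρ - ε) / (r / 2 - ε)) * ψ ε +
        (ρ - ε) / (r / 2 - ε) * ψ (r / 2)) (𝓝[>] 0)
        (𝓝 ((1 - ρ / (r / 2)) * (1 - c * 0 - u0) + ρ / (r / 2) * ψ (r / 2))) := by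
      have h1 : Tendsto (fun ε : ℝ => (ρ - ε) / (r / 2 - ε)) (𝓝[>] 0) (𝓝 (ρ / (r / 2))) := by
        have : ContinuousAt (fun ε : ℝ => (ρ - ε) / (r / 2 - ε)) 0 :=
          ContinuousAt.div (by fun_prop) (by fun_prop) (by linarith)
        have := this.tendsto
        simp only [sub_zero] at this
        exact this.mono_left nhdsWithin_le_nhds
      exact ((tendsto_const_nhds.sub h1).mul hlim).add (h1.mul_const _)
    refine ge_of_tendsto hR ?_
    filter_upwards [Ioo_mem_nhdsGT hρ0] with ε hε
    have hd : 0 < r / 2 - ε := by linarith [hρ.2, hε.2]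
    have hεr : ε ∈ Ioo 0 r := ⟨hε.1, by linarith [hρ.2, hε.2]⟩
    have h20 : 0 ≤ 1 - (ρ - ε) / (r / 2 - ε) := by
      rw [sub_nonneg, div_le_one hd]; linarith [hρ.2]
    have h2 := hconv.2 hεr hs h20 (div_nonneg (by linarith [hε.2]) hd.le)
      (sub_add_cancel _ _)
    have h3 : (1 - (ρ - ε) / (r / 2 - ε)) • ε + ((ρ - ε) / (r / 2 - ε)) • (r / 2) = ρ := by
      simp only [smul_eq_mul]
      have : (ρ - ε) / (r / 2 - ε) * (r / 2 - ε) = ρ - ε := div_mul_cancel₀ _ hd.ne'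
      linarith
    rw [h3] at h2
    exact h2
  have hlow : (C - c) * ρ ^ (2 / 3 : ℝ) ≤ ψ ρ := by
    have := hW ρ ⟨hρ.1, by linarith [hρ.2]⟩
    simp only [hψ]; linarith
  have hu := h.zero_lt
  have ht0 : 0 ≤ ρ / (r / 2) := by positivity
  have e : ρ / (r / 2) = 2 / r * ρ := by field_simp
  rw [← e]
  nlinarith [mul_nonneg ht0 (sub_nonneg.2 hψs), mul_nonneg ht0 (sub_nonneg.2 hu.le)]

end

theorem lower_contra {N : ℕ} (hN : 9 ≤ N) {l C r : ℝ} (hC0 : 0 < C) (hC : l < C ^ 3 * lamBar N)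
    (hr : r ∈ Ioc (0 : ℝ) 1)
    (H : ∀ ε > 0, ∃ lam W W1 u0, lam ≤ l ∧ RSol N lam W W1 u0 ∧ 1 - ε < u0 ∧
      ∀ ρ ∈ Ioo (0 : ℝ) r, C * ρ ^ (2 / 3 : ℝ) ≤ 1 - W ρ) : False := by
  have hlb := lamBar_pos hN
  set d := C - l / (C ^ 2 * lamBar N) with hd
  have hd0 : 0 < d := by
    rw [hd, sub_pos, div_lt_iff₀ (by positivity)]; linarith
  have h1 : ∀ ρ ∈ Ioo (0 : ℝ) (r / 2), d * ρ ^ (2 / 3 : ℝ) ≤ 2 / r * ρ := by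
    intro ρ hρ
    have hρ0 := hρ.1
    refine le_of_forall_pos_le_add fun ε hε => ?_
    obtain ⟨lam, W, W1, u0, hl, hs, hu, hW⟩ := H ε hε
    have h2 := hs.convex_bound hN hC0 hr hW ρ hρ
    have h3 : d ≤ C - lam / (C ^ 2 * lamBar N) := by
      rw [hd]; gcongr
    have h4 : d * ρ ^ (2 / 3 : ℝ) ≤ (C - lam / (C ^ 2 * lamBar N)) * ρ ^ (2 / 3 : ℝ) := by gcongr
    linarith
  have hr0 := hr.1
  have h2 : Tendsto (fun ρ : ℝ => 2 / r * ρ ^ (1 / 3 : ℝ)) (𝓝[>] 0) (𝓝 (2 / r * 0)) :=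
    (rpow_lim (by norm_num)).const_mul _
  have h3 : d ≤ 2 / r * 0 := by
    refine ge_of_tendsto h2 ?_
    filter_upwards [Ioo_mem_nhdsGT (show 0 < r / 2 by linarith)] with ρ hρ
    have hρ0 := hρ.1
    have h4 := h1 ρ hρ
    have h5 : ρ = ρ ^ (1 / 3 : ℝ) * ρ ^ (2 / 3 : ℝ) := by
      rw [← Real.rpow_add hρ0]; norm_num
    have h6 : 2 / r * ρ = 2 / r * ρ ^ (1 / 3 : ℝ) * ρ ^ (2 / 3 : ℝ) := by
      rw [mul_assoc, ← h5]
    rw [h6] at h4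
    exact le_of_mul_le_mul_right h4 (by positivity)
  linarith

theorem lap_congr {N : ℕ} {u v : EuclideanSpace ℝ (Fin N) → ℝ} {x : EuclideanSpace ℝ (Fin N)}
    (h : u =ᶠ[𝓝 x] v) : lap u x = lap v x := by
  unfold lap
  refine Finset.sum_congr rfl fun i _ => ?_
  have : (fun y => fderiv ℝ u y (EuclideanSpace.single i 1)) =ᶠ[𝓝 x]
      (fun y => fderiv ℝ v y (EuclideanSpace.single i 1)) := by
    filter_upwards [h.eventuallyEq_nhds] with y hy
    rw [hy.fderiv_eq]
  rw [this.fderiv_eq]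

theorem lap_contDiffAt {N : ℕ} {u : EuclideanSpace ℝ (Fin N) → ℝ} {x : EuclideanSpace ℝ (Fin N)}
    {n m : ℕ∞} (h : ContDiffAt ℝ n u x) (hn : m + 2 ≤ n) : ContDiffAt ℝ m (lap u) x := by
  unfold lap
  refine ContDiffAt.sum fun i _ => ?_
  have h1 : ContDiffAt ℝ ((m + 1 : ℕ∞) : WithTop ℕ∞)
      (fun y => fderiv ℝ u y (EuclideanSpace.single i 1)) x := by
    refine ContDiffAt.clm_apply (h.fderiv_right ?_) contDiffAt_const
    have : m + 1 + 1 ≤ n := by rw [add_assoc]; exact hn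
    exact_mod_cast this
  refine ContDiffAt.clm_apply (h1.fderiv_right ?_) contDiffAt_const
  exact_mod_cast le_rfl

theorem lap_eq_laplacian {N : ℕ} {u : EuclideanSpace ℝ (Fin N) → ℝ}
    {x : EuclideanSpace ℝ (Fin N)}
    (h : ContDiffAt ℝ 2 u x) : lap u x =
      ∑ i, iteratedFDeriv ℝ 2 u x ![EuclideanSpace.single i 1, EuclideanSpace.single i 1] := by
  unfold lap
  refine Finset.sum_congr rfl fun i _ => ?_
  rw [iteratedFDeriv_two_apply]
  have hd : DifferentiableAt ℝ (fderiv ℝ u) x :=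
    (h.fderiv_right (m := 1) (by norm_num)).differentiableAt (by norm_num)
  rw [fderiv_clm_apply hd (differentiableAt_const _)]
  simp

theorem lap_comp {N : ℕ} {u : EuclideanSpace ℝ (Fin N) → ℝ}
    {x : EuclideanSpace ℝ (Fin N)} (A : EuclideanSpace ℝ (Fin N) ≃ₗᵢ[ℝ] EuclideanSpace ℝ (Fin N))
    (h : ContDiffAt ℝ 2 u (A x)) : lap (u ∘ A) x = lap u (A x) := by
  have h2 : ContDiffAt ℝ 2 (u ∘ A) x := h.comp x A.contDiff.contDiffAt
  rw [lap_eq_laplacian h, lap_eq_laplacian h2]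
  have e1 := congrFun (InnerProductSpace.laplacian_eq_iteratedFDeriv_orthonormalBasis u
    (EuclideanSpace.basisFun (Fin N) ℝ)) (A x)
  have e2 := congrFun (InnerProductSpace.laplacian_eq_iteratedFDeriv_orthonormalBasis u
    ((EuclideanSpace.basisFun (Fin N) ℝ).map A)) (A x)
  rw [e1] at e2
  simp only [EuclideanSpace.basisFun_apply, OrthonormalBasis.map_apply] at e2
  rw [e2]
  refine Finset.sum_congr rfl fun i _ => ?_
  have e3 : iteratedFDeriv ℝ 2 (u ∘ A) x = (iteratedFDeriv ℝ 2 u (A x)).compContinuousLinearMap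
      fun _ => (A.toContinuousLinearEquiv :
        EuclideanSpace ℝ (Fin N) →L[ℝ] EuclideanSpace ℝ (Fin N)) := by
    have := A.toContinuousLinearEquiv.iteratedFDerivWithin_comp_right u uniqueDiffOn_univ
      (mem_univ (A.toContinuousLinearEquiv x)) 2
    rw [preimage_univ, iteratedFDerivWithin_univ, iteratedFDerivWithin_univ] at this
    exact this
  rw [e3, ContinuousMultilinearMap.compContinuousLinearMap_apply]
  congr 1
  funext j
  refine Fin.cases ?_ (fun k => Fin.cases ?_ (fun l => l.elim0) k) j
  · rfl
  · rfl

theorem IsClassicalSolution.contDiffAt {N : ℕ} {lam : ℝ} {u : EuclideanSpace ℝ (Fin N) → ℝ}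
    (h : IsClassicalSolution N lam u) {x : EuclideanSpace ℝ (Fin N)} (hx : x ∈ ball 0 1) :
    ContDiffAt ℝ 4 u x :=
  h.contDiffOn.contDiffAt (mem_of_superset (isOpen_ball.mem_nhds hx) ball_subset_closedBall)

theorem IsClassicalSolution.comp {N : ℕ} {lam : ℝ} {u : EuclideanSpace ℝ (Fin N) → ℝ}
    (h : IsClassicalSolution N lam u)
    (A : EuclideanSpace ℝ (Fin N) ≃ₗᵢ[ℝ] EuclideanSpace ℝ (Fin N)) :
    IsClassicalSolution N lam (u ∘ A) := by
  have hb : ∀ x, x ∈ ball (0 : EuclideanSpace ℝ (Fin N)) 1 → A x ∈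
      ball (0 : EuclideanSpace ℝ (Fin N)) 1 := by
    intro x hx; simpa using hx
  have hcb : MapsTo A (closedBall (0 : EuclideanSpace ℝ (Fin N)) 1)
      (closedBall (0 : EuclideanSpace ℝ (Fin N)) 1) := by
    intro x hx; simpa using hx
  refine ⟨h.contDiffOn.comp A.contDiff.contDiffOn hcb, fun x hx => h.pos _ (hb x hx),
    fun x hx => h.lt_one _ (hb x hx), ?_, ?_, ?_⟩
  · intro x hx
    refine Eq.trans ?_ (h.eqn (A x) (hb x hx))
    unfold biharm
    have e : lap (u ∘ A) =ᶠ[𝓝 x] (lap u) ∘ A := by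
      filter_upwards [isOpen_ball.mem_nhds hx] with y hy
      exact lap_comp A ((h.contDiffAt (hb y hy)).of_le (by norm_num))
    rw [lap_congr e, lap_comp]
    exact lap_contDiffAt (n := 4) (m := 2) (h.contDiffAt (hb x hx)) (by norm_num)
  · intro x hx
    exact h.bdry (A x) (by simpa using hx)
  · intro x hx
    have hx' : x ∈ closedBall (0 : EuclideanSpace ℝ (Fin N)) 1 := by simp [hx]
    have hu : UniqueDiffWithinAt ℝ (closedBall (0 : EuclideanSpace ℝ (Fin N)) 1) x :=
      uniqueDiffOn_convex (convex_closedBall _ _) (by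
        rw [interior_closedBall _ one_ne_zero]; exact ⟨0, by simp⟩) x hx'
    have hd : DifferentiableWithinAt ℝ u (closedBall 0 1) (A x) :=
      (h.contDiffOn.differentiableOn (by norm_num)) _ (hcb hx')
    have := fderivWithin_comp x (g := u) (f := A) hd
      (A.toContinuousLinearEquiv.differentiableAt.differentiableWithinAt) hcb hu
    rw [this]
    have e : fderivWithin ℝ (A : EuclideanSpace ℝ (Fin N) → EuclideanSpace ℝ (Fin N))
        (closedBall 0 1) x = (A : EuclideanSpace ℝ (Fin N) →L[ℝ] EuclideanSpace ℝ (Fin N)) :=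
      A.toContinuousLinearEquiv.hasFDerivAt.hasFDerivWithinAt.fderivWithin hu
    rw [e]
    exact h.bdry_deriv (A x) (by simpa using hx)

theorem radial_of_min {N : ℕ} {lam : ℝ} {u : EuclideanSpace ℝ (Fin N) → ℝ}
    (h : IsClassicalSolution N lam u) (hmin : ∀ v, IsClassicalSolution N lam v →
          ∀ x ∈ ball (0 : EuclideanSpace ℝ (Fin N)) 1, u x ≤ v x) :
    ∀ x ∈ ball (0 : EuclideanSpace ℝ (Fin N)) 1, ∀ y, ‖x‖ = ‖y‖ → u x = u y := by
  have key : ∀ x ∈ ball (0 : EuclideanSpace ℝ (Fin N)) 1, ∀ y, ‖x‖ = ‖y‖ → u x ≤ u y := by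
    intro x hx y hxy
    have := hmin _ (h.comp (Submodule.reflection (ℝ ∙ (x - y))ᗮ)) x hx
    simp only [Function.comp] at this
    rwa [Submodule.reflection_sub hxy] at this
  intro x hx y hxy
  refine le_antisymm (key x hx y hxy) (key y ?_ x hxy.symm)
  rw [mem_ball_zero_iff] at hx ⊢
  rwa [← hxy]

theorem hasFDerivAt_normsq {N : ℕ} (x : EuclideanSpace ℝ (Fin N)) :
    HasFDerivAt (fun y : EuclideanSpace ℝ (Fin N) => ‖y‖ ^ 2) (2 • (innerSL ℝ x)) x :=
  (hasStrictFDerivAt_norm_sq x).hasFDerivAt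

theorem lap_radial {N : ℕ} {u : EuclideanSpace ℝ (Fin N) → ℝ} {W W1 : ℝ → ℝ} {w2 : ℝ}
    {x : EuclideanSpace ℝ (Fin N)} (hu : u =ᶠ[𝓝 x] fun y => W (‖y‖ ^ 2))
    (h1 : ∀ᶠ ρ in 𝓝 (‖x‖ ^ 2), HasDerivAt W (W1 ρ) ρ) (h2 : HasDerivAt W1 w2 (‖x‖ ^ 2)) :
    lap u x = 4 * ‖x‖ ^ 2 * w2 + 2 * N * W1 (‖x‖ ^ 2) := by
  rw [lap_congr hu]
  unfold lap
  have hcont : Tendsto (fun y : EuclideanSpace ℝ (Fin N) => ‖y‖ ^ 2) (𝓝 x) (𝓝 (‖x‖ ^ 2)) :=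
    (by fun_prop : Continuous fun y : EuclideanSpace ℝ (Fin N) => ‖y‖ ^ 2).tendsto x
  have e : ∀ i, fderiv ℝ (fun y => fderiv ℝ (fun y : EuclideanSpace ℝ (Fin N) => W (‖y‖ ^ 2)) y
      (EuclideanSpace.single i 1)) x (EuclideanSpace.single i 1) =
      4 * w2 * (x i) ^ 2 + 2 * W1 (‖x‖ ^ 2) := by
    intro i
    have e1 : (fun y => fderiv ℝ (fun y : EuclideanSpace ℝ (Fin N) => W (‖y‖ ^ 2)) y
      (EuclideanSpace.single i 1)) =ᶠ[𝓝 x] fun y => W1 (‖y‖ ^ 2) * (2 * y i) := by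
      filter_upwards [hcont.eventually h1] with y hy
      have := (hy.comp_hasFDerivAt y (hasFDerivAt_normsq y)).fderiv
      have e3 : fderiv ℝ (fun y : EuclideanSpace ℝ (Fin N) => W (‖y‖ ^ 2)) y = _ := this
      rw [e3]
      simp [EuclideanSpace.inner_single_right]
    rw [e1.fderiv_eq]
    have hp : HasFDerivAt (fun y : EuclideanSpace ℝ (Fin N) => y i)
      (EuclideanSpace.proj i : EuclideanSpace ℝ (Fin N) →L[ℝ] ℝ) x :=
      (EuclideanSpace.proj i : EuclideanSpace ℝ (Fin N) →L[ℝ] ℝ).hasFDerivAt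
    have h4 := ((h2.comp_hasFDerivAt x (hasFDerivAt_normsq x)).mul (hp.const_mul 2)).fderiv
    have h5 : fderiv ℝ (fun y : EuclideanSpace ℝ (Fin N) => W1 (‖y‖ ^ 2) * (2 * y i)) x = _ := h4
    rw [h5]
    simp [EuclideanSpace.inner_single_right]
    ring
  rw [Finset.sum_congr rfl fun i _ => e i, Finset.sum_add_distrib, ← Finset.mul_sum,
    EuclideanSpace.norm_sq_eq]
  simp
  ring

theorem biharm_radial {N : ℕ} {u : EuclideanSpace ℝ (Fin N) → ℝ} {W W1 W2 W3 W4 : ℝ → ℝ}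
    {I : Set ℝ} (hI : IsOpen I)
    (hu : ∀ y, ‖y‖ ^ 2 ∈ I → u y = W (‖y‖ ^ 2))
    (hd : ∀ ρ ∈ I, HasDerivAt W (W1 ρ) ρ ∧ HasDerivAt W1 (W2 ρ) ρ ∧
      HasDerivAt W2 (W3 ρ) ρ ∧ HasDerivAt W3 (W4 ρ) ρ)
    {x : EuclideanSpace ℝ (Fin N)} (hx : ‖x‖ ^ 2 ∈ I) :
    biharm u x = Bih N (‖x‖ ^ 2) (W2 (‖x‖ ^ 2)) (W3 (‖x‖ ^ 2)) (W4 (‖x‖ ^ 2)) := by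
  have hcont : Continuous fun y : EuclideanSpace ℝ (Fin N) => ‖y‖ ^ 2 := by fun_prop
  have hop : IsOpen ((fun y : EuclideanSpace ℝ (Fin N) => ‖y‖ ^ 2) ⁻¹' I) := hI.preimage hcont
  have hl : ∀ y, ‖y‖ ^ 2 ∈ I → lap u y =
      (fun ρ => 4 * ρ * W2 ρ + 2 * N * W1 ρ) (‖y‖ ^ 2) := by
    intro y hy
    apply lap_radial (W := W) (W1 := W1)
    · filter_upwards [hop.mem_nhds hy] with z hz
      exact hu z hz
    · filter_upwards [hI.mem_nhds hy] with ρ hρ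
      exact (hd ρ hρ).1
    · exact (hd _ hy).2.1
  have hL : ∀ ρ ∈ I, HasDerivAt (fun ρ => 4 * ρ * W2 ρ + 2 * N * W1 ρ)
      (4 * ρ * W3 ρ + (4 + 2 * N) * W2 ρ) ρ := by
    intro ρ hρ
    have := (((hasDerivAt_id ρ).const_mul 4).mul (hd ρ hρ).2.2.1).add
      ((hd ρ hρ).2.1.const_mul (2 * (N : ℝ)))
    refine this.congr_deriv ?_
    simp; ring
  have hL2 : HasDerivAt (fun ρ => 4 * ρ * W3 ρ + (4 + 2 * N) * W2 ρ)
      (4 * ‖x‖ ^ 2 * W4 (‖x‖ ^ 2) + (8 + 2 * N) * W3 (‖x‖ ^ 2)) (‖x‖ ^ 2) := by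
    have := (((hasDerivAt_id (‖x‖ ^ 2)).const_mul 4).mul (hd _ hx).2.2.2).add
      ((hd _ hx).2.2.1.const_mul (4 + 2 * (N : ℝ)))
    refine this.congr_deriv ?_
    simp; ring
  unfold biharm
  rw [lap_radial (W := fun ρ => 4 * ρ * W2 ρ + 2 * N * W1 ρ)
    (W1 := fun ρ => 4 * ρ * W3 ρ + (4 + 2 * N) * W2 ρ) _ _ hL2]
  · unfold Bih; ring
  · filter_upwards [hop.mem_nhds hx] with z hz
    exact hl z hz
  · filter_upwards [hI.mem_nhds hx] with ρ hρ
    exact hL ρ hρ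

theorem profile {U U1 U2 U3 U4 : ℝ → ℝ} 
    (hd : ∀ r ∈ Ioo (0 : ℝ) 1, HasDerivAt U (U1 r) r ∧ HasDerivAt U1 (U2 r) r ∧
      HasDerivAt U2 (U3 r) r ∧ HasDerivAt U3 (U4 r) r) :
    ∀ ρ ∈ Ioo (0 : ℝ) 1, HasDerivAt (fun ρ => U (√ρ)) (U1 (√ρ) / (2 * √ρ)) ρ ∧
      HasDerivAt (fun ρ => U1 (√ρ) / (2 * √ρ)) (U2 (√ρ) / (4 * √ρ ^ 2) - U1 (√ρ) / (4 * √ρ ^ 3)) ρ ∧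
      HasDerivAt (fun ρ => U2 (√ρ) / (4 * √ρ ^ 2) - U1 (√ρ) / (4 * √ρ ^ 3))
        (U3 (√ρ) / (8 * √ρ ^ 3) - 3 * U2 (√ρ) / (8 * √ρ ^ 4) + 3 * U1 (√ρ) / (8 * √ρ ^ 5)) ρ ∧
      HasDerivAt (fun ρ => U3 (√ρ) / (8 * √ρ ^ 3) - 3 * U2 (√ρ) / (8 * √ρ ^ 4) +
          3 * U1 (√ρ) / (8 * √ρ ^ 5))
        (U4 (√ρ) / (16 * √ρ ^ 4) - 6 * U3 (√ρ) / (16 * √ρ ^ 5) + 15 * U2 (√ρ) / (16 * √ρ ^ 6)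
          - 15 * U1 (√ρ) / (16 * √ρ ^ 7)) ρ := by
  intro ρ hρ
  have hs0 : 0 < √ρ := Real.sqrt_pos.2 hρ.1
  have hs1 : √ρ < 1 := by rw [Real.sqrt_lt' one_pos]; simpa using hρ.2
  obtain ⟨a0, a1, a2, a3⟩ := hd (√ρ) ⟨hs0, hs1⟩
  have hsq : HasDerivAt (fun x => √x) (1 / (2 * √ρ)) ρ := Real.hasDerivAt_sqrt hρ.1.ne'
  have hp : ∀ (n : ℕ) (c : ℝ), HasDerivAt (fun r : ℝ => c * r ^ n) (c * (n * √ρ ^ (n - 1))) (√ρ) :=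
    fun n c => (hasDerivAt_pow n (√ρ)).const_mul c
  refine ⟨?_, ?_, ?_, ?_⟩
  · refine (a0.comp ρ hsq).congr_deriv ?_
    ring
  · have := (a1.div (((hasDerivAt_id (√ρ)).const_mul 2)) (by simpa using hs0.ne')).comp ρ hsq
    refine this.congr_deriv ?_
    simp; field_simp; ring
  · have := ((a2.div (hp 2 4) (by positivity)).sub (a1.div (hp 3 4) (by positivity))).comp ρ hsq
    refine this.congr_deriv ?_
    simp; field_simp; ring
  · have := (((a3.div (hp 3 8) (by positivity)).sub ((a2.const_mul 3).div (hp 4 8)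
      (by positivity))).add ((a1.const_mul 3).div (hp 5 8) (by positivity))).comp ρ hsq
    refine this.congr_deriv ?_
    simp; field_simp; ring

theorem sqrt_lim : Tendsto (fun ρ : ℝ => √ρ) (𝓝[>] 0) (𝓝 0) := by
  have := (Real.continuous_sqrt.tendsto 0)
  rw [Real.sqrt_zero] at this
  exact this.mono_left nhdsWithin_le_nhds

theorem rsol_of_radial {N : ℕ} (hN : 9 ≤ N) {lam : ℝ} (hlam : 0 < lam)
    {u : EuclideanSpace ℝ (Fin N) → ℝ}
    (h : IsClassicalSolution N lam u)
    (hr : ∀ x ∈ ball (0 : EuclideanSpace ℝ (Fin N)) 1, ∀ y, ‖x‖ = ‖y‖ → u x = u y) :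
    ∃ W W1, RSol N lam W W1 (u 0) ∧
      ∀ x ∈ ball (0 : EuclideanSpace ℝ (Fin N)) 1, u x = W (‖x‖ ^ 2) := by
  set e : EuclideanSpace ℝ (Fin N) := EuclideanSpace.single ⟨0, by omega⟩ 1 with he
  have hen : ‖e‖ = 1 := by simp [he]
  have hne : ∀ r : ℝ, ‖r • e‖ = |r| := by intro r; rw [norm_smul, hen, mul_one]; rfl
  set U : ℝ → ℝ := fun r => u (r • e) with hU
  set S : Set ℝ := Icc (-1) 1 with hS
  have hSu : UniqueDiffOn ℝ S := uniqueDiffOn_Icc (by norm_num)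
  have hmaps : MapsTo (fun r : ℝ => r • e) S (closedBall 0 1) := by
    intro r hr
    rw [mem_closedBall_zero_iff, hne]; exact abs_le.2 hr
  have hUc : ContDiffOn ℝ 4 U S := h.contDiffOn.comp
    (by fun_prop : ContDiff ℝ 4 fun r : ℝ => r • e).contDiffOn hmaps
  set D : ℕ → ℝ → ℝ := fun k => iteratedDerivWithin k U S with hD
  have hDc : ∀ k ≤ 4, ContinuousOn (D k) S := fun k hk =>
    hUc.continuousOn_iteratedDerivWithin (by exact_mod_cast hk) hSu
  have hDd : ∀ k < 4, ∀ r ∈ Ioo (-1 : ℝ) 1, HasDerivAt (D k) (D (k + 1) r) r := by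
    intro k hk r hr
    have h1 : DifferentiableWithinAt ℝ (D k) S r :=
      hUc.differentiableOn_iteratedDerivWithin (by exact_mod_cast hk) hSu r ⟨hr.1.le, hr.2.le⟩
    have h2 := h1.hasDerivWithinAt.hasDerivAt (Icc_mem_nhds hr.1 hr.2)
    have h3 : D (k + 1) r = derivWithin (D k) S r := by
      simp only [hD]; rw [iteratedDerivWithin_succ]
    rw [h3]; exact h2
  have hD0 : D 0 = U := by simp only [hD]; exact iteratedDerivWithin_zero
  have hpf := profile (U := D 0) (U1 := D 1) (U2 := D 2) (U3 := D 3) (U4 := D 4)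
    (fun r hr => by
      have hr' : r ∈ Ioo (-1 : ℝ) 1 := ⟨by linarith [hr.1], hr.2⟩
      exact ⟨hDd 0 (by norm_num) r hr', hDd 1 (by norm_num) r hr', hDd 2 (by norm_num) r hr',
        hDd 3 (by norm_num) r hr'⟩)
  have hWu : ∀ x ∈ ball (0 : EuclideanSpace ℝ (Fin N)) 1, u x = D 0 (√(‖x‖ ^ 2)) := by
    intro x hx
    rw [hD0, Real.sqrt_sq (norm_nonneg x)]
    exact hr x hx _ (by rw [hne, abs_of_nonneg (norm_nonneg x)])
  have hsm : ∀ ρ ∈ Ioo (0 : ℝ) 1, √ρ • e ∈ ball (0 : EuclideanSpace ℝ (Fin N)) 1 := by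
    intro ρ hρ
    rw [mem_ball_zero_iff, hne, abs_of_nonneg (Real.sqrt_nonneg _), Real.sqrt_lt' one_pos]
    simpa using hρ.2
  have hlimD : ∀ k ≤ 4, Tendsto (fun ρ => D k (√ρ)) (𝓝[>] 0) (𝓝 (D k 0)) := by
    intro k hk
    have : ContinuousAt (D k) 0 := (hDc k hk).continuousAt (Icc_mem_nhds (by norm_num) (by norm_num))
    exact this.tendsto.comp sqrt_lim
  have hsc : ∀ k ≤ 4, ContinuousOn (fun ρ => D k (√ρ)) (Ioc 0 1) := by
    intro k hk
    refine (hDc k hk).comp Real.continuous_sqrt.continuousOn fun ρ hρ => ?_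
    exact ⟨by linarith [Real.sqrt_nonneg ρ], Real.sqrt_le_one.2 hρ.2⟩
  have hcl : ∀ k : ℕ, k ≠ 0 → Tendsto (fun ρ => √ρ ^ k) (𝓝[>] 0) (𝓝 0) := by
    intro k hk
    have := sqrt_lim.pow k
    rwa [zero_pow hk] at this
  refine ⟨fun ρ => D 0 (√ρ), fun ρ => D 1 (√ρ) / (2 * √ρ), ⟨⟨
    fun ρ => D 2 (√ρ) / (4 * √ρ ^ 2) - D 1 (√ρ) / (4 * √ρ ^ 3),
    fun ρ => D 3 (√ρ) / (8 * √ρ ^ 3) - 3 * D 2 (√ρ) / (8 * √ρ ^ 4) + 3 * D 1 (√ρ) / (8 * √ρ ^ 5),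
    fun ρ => D 4 (√ρ) / (16 * √ρ ^ 4) - 6 * D 3 (√ρ) / (16 * √ρ ^ 5) + 15 * D 2 (√ρ) / (16 * √ρ ^ 6)
          - 15 * D 1 (√ρ) / (16 * √ρ ^ 7), fun ρ hρ => ?_, ?_, ?_⟩, hlam,
    hsc 0 (by norm_num), ?_, ?_, ?_, ?_, ?_, ?_, h.lt_one 0 (by simp)⟩, hWu⟩
  · obtain ⟨b1, b2, b3, b4⟩ := hpf ρ hρ
    refine ⟨b1, b2, b3, b4, ?_⟩
    have hρs : ‖√ρ • e‖ ^ 2 = ρ := by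
      rw [hne, sq_abs, Real.sq_sqrt hρ.1.le]
    have h1 := biharm_radial (N := N) (u := u) (I := Ioo 0 1) isOpen_Ioo
      (fun y hy => hWu y (by
        rw [mem_ball_zero_iff]
        have := hy.2
        nlinarith [norm_nonneg y])) hpf (x := √ρ • e) (by rw [hρs]; exact hρ)
    have h2 := h.eqn (√ρ • e) (hsm ρ hρ)
    rw [h1, hWu _ (hsm ρ hρ), hρs] at h2
    exact h2
  · have h1 := ((hcl 6 (by norm_num)).mul (hlimD 2 (by norm_num))).const_mul (1 / 4)
    have h2 := ((hcl 5 (by norm_num)).mul (hlimD 1 (by norm_num))).const_mul (1 / 4)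
    have h3 := h1.sub h2
    simp only [zero_mul, mul_zero, sub_zero] at h3
    refine h3.congr' ?_
    filter_upwards [self_mem_nhdsWithin] with ρ hρ
    have hs0 : 0 < √ρ := Real.sqrt_pos.2 hρ
    have e1 : ρ ^ 4 = √ρ ^ 8 := by
      rw [show (8 : ℕ) = 2 * 4 by norm_num, pow_mul, Real.sq_sqrt (le_of_lt hρ)]
    rw [e1]; field_simp
  · have h1 := ((hcl 7 (by norm_num)).mul (hlimD 3 (by norm_num))).const_mul (1 / 8)
    have h2 := ((hcl 6 (by norm_num)).mul (hlimD 2 (by norm_num))).const_mul (3 / 8)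
    have h4 := ((hcl 5 (by norm_num)).mul (hlimD 1 (by norm_num))).const_mul (3 / 8)
    have h3 := (h1.sub h2).add h4
    simp only [zero_mul, mul_zero, sub_zero, add_zero] at h3
    refine h3.congr' ?_
    filter_upwards [self_mem_nhdsWithin] with ρ hρ
    have hs0 : 0 < √ρ := Real.sqrt_pos.2 hρ
    have e1 : ρ ^ 5 = √ρ ^ 10 := by
      rw [show (10 : ℕ) = 2 * 5 by norm_num, pow_mul, Real.sq_sqrt (le_of_lt hρ)]
    rw [e1]; field_simp
  · refine (hsc 1 (by norm_num)).div (by fun_prop) fun ρ hρ => ?_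
    have hs0 : 0 < √ρ := Real.sqrt_pos.2 hρ.1
    positivity
  · simp only [hD0, hU]
    exact h.bdry _ (by simp [hen])
  · have h1 : D 1 1 = 0 := by
      have e1 : D 1 1 = derivWithin U S 1 := by
        simp only [hD]; rw [iteratedDerivWithin_one]
      have hd : DifferentiableWithinAt ℝ u (closedBall 0 1) ((1 : ℝ) • e) :=
        (h.contDiffOn.differentiableOn (by norm_num)) _ (hmaps ⟨by norm_num, le_rfl⟩)
      have hg : HasDerivWithinAt (fun r : ℝ => r • e) ((1 : ℝ) • e) S 1 :=
        ((hasDerivAt_id (1 : ℝ)).smul_const e).hasDerivWithinAt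
      have := hd.hasFDerivWithinAt.comp_hasDerivWithinAt 1 hg hmaps
      rw [e1]
      have h3 := this.derivWithin (hSu 1 ⟨by norm_num, le_rfl⟩)
      have h4 : derivWithin U S 1 = _ := h3
      rw [h4]
      exact h.bdry_deriv _ (by simp [hen])
    simp [h1]
  · intro ρ hρ
    simp only [hD0, hU]
    exact h.pos _ (hsm ρ hρ)
  · intro ρ hρ
    simp only [hD0, hU]
    exact h.lt_one _ (hsm ρ hρ)
  · have := hlimD 0 (by norm_num)
    rw [hD0] at this
    simpa [hD0, hU] using this

theorem ibp_lap {N : ℕ} {f g : EuclideanSpace ℝ (Fin N) → ℝ} (hf : ContDiff ℝ 2 f)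
    (hg : ContDiff ℝ 2 g) (hc : HasCompactSupport f) :
    ∫ x, f x * lap g x = ∫ x, lap f x * g x := by
  have hf1 : ∀ v, ContDiff ℝ 1 (fun x => fderiv ℝ f x v) := fun v =>
    ContDiff.clm_apply (hf.fderiv_right (by norm_num)) contDiff_const
  have hg1 : ∀ v, ContDiff ℝ 1 (fun x => fderiv ℝ g x v) := fun v =>
    ContDiff.clm_apply (hg.fderiv_right (by norm_num)) contDiff_const
  have hf2 : ∀ v, Continuous (fun x => fderiv ℝ (fun y => fderiv ℝ f y v) x v) := fun v =>
    ((hf1 v).continuous_fderiv (by norm_num)).clm_apply continuous_const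
  have hg2 : ∀ v, Continuous (fun x => fderiv ℝ (fun y => fderiv ℝ g y v) x v) := fun v =>
    ((hg1 v).continuous_fderiv (by norm_num)).clm_apply continuous_const
  have hc1 : ∀ v, HasCompactSupport (fun x => fderiv ℝ f x v) := fun v => hc.fderiv_apply ℝ v
  have hc2 : ∀ v, HasCompactSupport (fun x => fderiv ℝ (fun y => fderiv ℝ f y v) x v) :=
    fun v => (hc1 v).fderiv_apply ℝ v
  unfold lap
  simp only [Finset.mul_sum, Finset.sum_mul]
  rw [integral_finsetSum, integral_finsetSum]
  · refine Finset.sum_congr rfl fun i _ => ?_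
    set v : EuclideanSpace ℝ (Fin N) := EuclideanSpace.single i 1
    have i1 : Integrable (fun x => f x * fderiv ℝ (fun y => fderiv ℝ g y v) x v) :=
      (hf.continuous.mul (hg2 v)).integrable_of_hasCompactSupport (hc.mul_right)
    have i2 : Integrable (fun x => fderiv ℝ f x v * fderiv ℝ g x v) :=
      ((hf1 v).continuous.mul (hg1 v).continuous).integrable_of_hasCompactSupport
        ((hc1 v).mul_right)
    have i3 : Integrable (fun x => f x * fderiv ℝ g x v) :=
      (hf.continuous.mul (hg1 v).continuous).integrable_of_hasCompactSupport (hc.mul_right)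
    have i4 : Integrable (fun x => fderiv ℝ (fun y => fderiv ℝ f y v) x v * g x) :=
      ((hf2 v).mul hg.continuous).integrable_of_hasCompactSupport ((hc2 v).mul_right)
    have i5 : Integrable (fun x => fderiv ℝ f x v * g x) :=
      ((hf1 v).continuous.mul hg.continuous).integrable_of_hasCompactSupport ((hc1 v).mul_right)
    have e1 := integral_mul_fderiv_eq_neg_fderiv_mul_of_integrable
      (f := f) (g := fun y => fderiv ℝ g y v) (v := v) i2 i1 i3
      (fun x _ => (hf.differentiable (by norm_num)) x)
      (fun x _ => ((hg1 v).differentiable (by norm_num)) x)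
    have e2 := integral_mul_fderiv_eq_neg_fderiv_mul_of_integrable
      (f := fun y => fderiv ℝ f y v) (g := g) (v := v) i4 i2 i5
      (fun x _ => ((hf1 v).differentiable (by norm_num)) x)
      (fun x _ => (hg.differentiable (by norm_num)) x)
    rw [e1, e2, neg_neg]
  · intro i _
    exact ((hf2 _).mul hg.continuous).integrable_of_hasCompactSupport ((hc2 _).mul_right)
  · intro i _
    exact (hf.continuous.mul (hg2 _)).integrable_of_hasCompactSupport (hc.mul_right)

theorem lap_hasCompactSupport {N : ℕ} {f : EuclideanSpace ℝ (Fin N) → ℝ}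
    (hc : HasCompactSupport f) : HasCompactSupport (lap f) := by
  refine HasCompactSupport.of_support_subset_isCompact hc fun x hx => ?_
  by_contra hcon
  apply hx
  have h0 : f =ᶠ[𝓝 x] fun _ => 0 := notMem_tsupport_iff_eventuallyEq.1 hcon
  rw [lap_congr h0]
  simp [lap]

theorem solSet_bdd (N : ℕ) : BddAbove (solSet N) := by
  let ψ : ContDiffBump (0 : EuclideanSpace ℝ (Fin N)) := ⟨1 / 8, 1 / 4, by norm_num, by norm_num⟩
  let χ : ContDiffBump (0 : EuclideanSpace ℝ (Fin N)) := ⟨1 / 2, 3 / 4, by norm_num, by norm_num⟩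
  have hψ : ContDiff ℝ 4 ψ := ψ.contDiff
  have hψ2 : ContDiff ℝ 2 ψ := ψ.contDiff
  have hψc : HasCompactSupport ψ := ψ.hasCompactSupport
  have hlψ : ContDiff ℝ 2 (lap ψ) := contDiff_iff_contDiffAt.2 fun x =>
    lap_contDiffAt (n := 4) (m := 2) hψ.contDiffAt (by norm_num)
  have hbψ : Continuous (biharm ψ) := by
    refine (contDiff_iff_contDiffAt.2 fun x =>
      lap_contDiffAt (n := 2) (m := 0) hlψ.contDiffAt (by norm_num)).continuous (n := 0)
  have hbc : HasCompactSupport (biharm ψ) := lap_hasCompactSupport (lap_hasCompactSupport hψc)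
  have hbi : Integrable (biharm ψ) := hbψ.integrable_of_hasCompactSupport hbc
  have hI : 0 < ∫ x, ψ x := ψ.integral_pos
  refine ⟨(∫ x, |biharm ψ x|) / ∫ x, ψ x, ?_⟩
  rintro lam ⟨hl, u, h⟩
  rw [le_div_iff₀ hI]
  set w : EuclideanSpace ℝ (Fin N) → ℝ := fun x => χ x * u x with hw
  have hw4 : ContDiff ℝ 4 w := by
    refine contDiff_iff_contDiffAt.2 fun x => ?_
    by_cases hx : x ∈ ball (0 : EuclideanSpace ℝ (Fin N)) 1
    · exact χ.contDiff.contDiffAt.mul (h.contDiffAt hx)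
    · have : w =ᶠ[𝓝 x] fun _ => 0 := by
        have hx2 : x ∈ (closedBall (0 : EuclideanSpace ℝ (Fin N)) (3 / 4))ᶜ := by
          simp at hx ⊢; linarith
        filter_upwards [isClosed_closedBall.isOpen_compl.mem_nhds hx2] with y hy
        have : χ y = 0 := by
          apply χ.zero_of_le_dist
          simp at hy ⊢; show 3 / 4 ≤ _; linarith
        simp [hw, this]
      exact contDiffAt_const.congr_of_eventuallyEq this
  have hlw : ContDiff ℝ 2 (lap w) := contDiff_iff_contDiffAt.2 fun x =>
    lap_contDiffAt (n := 4) (m := 2) hw4.contDiffAt (by norm_num)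
  have hbw : Continuous (biharm w) := by
    refine (contDiff_iff_contDiffAt.2 fun x =>
      lap_contDiffAt (n := 2) (m := 0) hlw.contDiffAt (by norm_num)).continuous (n := 0)
  have e1 : ∫ x, ψ x * biharm w x = ∫ x, lap ψ x * lap w x := ibp_lap hψ2 hlw hψc
  have e2 : ∫ x, lap ψ x * lap w x = ∫ x, biharm ψ x * w x :=
    ibp_lap hlψ (hw4.of_le (by norm_num)) (lap_hasCompactSupport hψc)
  have hψi : Integrable ψ := ψ.continuous.integrable_of_hasCompactSupport hψc
  calc lam * ∫ x, ψ x = ∫ x, lam * ψ x := (integral_const_mul _ _).symm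
    _ ≤ ∫ x, ψ x * biharm w x := by
      refine integral_mono (hψi.const_mul lam)
        ((ψ.continuous.mul hbw).integrable_of_hasCompactSupport hψc.mul_right) fun x => ?_
      show lam * ψ x ≤ ψ x * biharm w x
      by_cases hx : x ∈ ball (0 : EuclideanSpace ℝ (Fin N)) (1 / 4)
      · have e : biharm w x = biharm u x := by
          unfold biharm
          apply lap_congr
          have hx2 : x ∈ ball (0 : EuclideanSpace ℝ (Fin N)) (1 / 2) :=
            ball_subset_ball (by norm_num) hx
          filter_upwards [isOpen_ball.mem_nhds hx2] with y hy
          apply lap_congr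
          filter_upwards [isOpen_ball.mem_nhds hy] with z hz
          have : χ z = 1 := χ.one_of_mem_closedBall (ball_subset_closedBall hz)
          simp [hw, this]
        have hx1 : x ∈ ball (0 : EuclideanSpace ℝ (Fin N)) 1 :=
          ball_subset_ball (by norm_num) hx
        rw [e, h.eqn x hx1, mul_comm lam]
        refine mul_le_mul_of_nonneg_left ?_ ψ.nonneg
        have a := h.pos x hx1
        have b := h.lt_one x hx1
        rw [le_div_iff₀ (by nlinarith)]
        exact mul_le_of_le_one_right hl.le (by nlinarith)
      · have : ψ x = 0 := by
          apply ψ.zero_of_le_dist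
          simp at hx ⊢; show 1 / 4 ≤ _; linarith
        simp [this]
    _ = ∫ x, biharm ψ x * w x := by rw [e1, e2]
    _ ≤ ∫ x, |biharm ψ x| := by
      refine integral_mono ((hbψ.mul hw4.continuous).integrable_of_hasCompactSupport
        hbc.mul_right) hbi.abs fun x => ?_
      show biharm ψ x * w x ≤ |biharm ψ x|
      have hw1 : |w x| ≤ 1 := by
        by_cases hx : x ∈ ball (0 : EuclideanSpace ℝ (Fin N)) 1
        · have a := h.pos x hx
          have b := h.lt_one x hx
          have c : 0 ≤ χ x := χ.nonneg
          have d : χ x ≤ 1 := χ.le_one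
          rw [hw, abs_of_nonneg (by positivity)]
          nlinarith
        · have : χ x = 0 := by
            apply χ.zero_of_le_dist
            simp at hx ⊢; show 3 / 4 ≤ _; linarith
          simp [hw, this]
      calc biharm ψ x * w x ≤ |biharm ψ x * w x| := le_abs_self _
        _ = |biharm ψ x| * |w x| := abs_mul _ _
        _ ≤ _ := by nlinarith [abs_nonneg (biharm ψ x)]

/-- Averaging operator along rays. -/
noncomputable def Aop (k : ℕ) (H : ℝ → ℝ) (ρ : ℝ) : ℝ := ∫ τ in (0 : ℝ)..1, τ ^ k * H (τ ^ 2 * ρ)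

/-- Inverse of the radial Laplacian in the variable `ρ = r ^ 2`. -/
noncomputable def Top' (N : ℕ) (H : ℝ → ℝ) (ρ : ℝ) : ℝ := ∫ s in (0 : ℝ)..ρ, 1 / 2 * Aop (N - 1) H s

theorem Aop_cont {k : ℕ} {H : ℝ → ℝ} (hH : Continuous H) : Continuous (Aop k H) := by
  unfold Aop
  apply intervalIntegral.continuous_parametric_intervalIntegral_of_continuous'
  show Continuous fun p : ℝ × ℝ => p.2 ^ k * H (p.2 ^ 2 * p.1)
  fun_prop

theorem Aop_int {k : ℕ} {H : ℝ → ℝ} (hH : Continuous H) (ρ a b : ℝ) :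
    IntervalIntegrable (fun τ => τ ^ k * H (τ ^ 2 * ρ)) volume a b :=
  (by fun_prop : Continuous fun τ => τ ^ k * H (τ ^ 2 * ρ)).intervalIntegrable _ _

theorem Aop_sub {k : ℕ} {F G : ℝ → ℝ} (hF : Continuous F) (hG : Continuous G) (ρ : ℝ) :
    Aop k F ρ - Aop k G ρ = Aop k (fun s => F s - G s) ρ := by
  unfold Aop
  rw [← intervalIntegral.integral_sub (Aop_int hF ρ 0 1) (Aop_int hG ρ 0 1)]
  congr 1; funext τ; ring

theorem Aop_deriv {k : ℕ} {H H' : ℝ → ℝ} (h : ∀ x, HasDerivAt H (H' x) x) (hc : Continuous H')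
    (ρ : ℝ) : HasDerivAt (Aop k H) (Aop (k + 2) H' ρ) ρ := by
  have hHc : Continuous H := continuous_iff_continuousAt.2 fun x => (h x).continuousAt
  have hK : IsCompact (Icc (-(|ρ| + 1)) (|ρ| + 1)) := isCompact_Icc
  obtain ⟨C, hC⟩ := hK.exists_bound_of_continuousOn hc.continuousOn
  have := intervalIntegral.hasDerivAt_integral_of_dominated_loc_of_deriv_le
    (F := fun ρ τ => τ ^ k * H (τ ^ 2 * ρ)) (F' := fun ρ τ => τ ^ (k + 2) * H' (τ ^ 2 * ρ))
    (x₀ := ρ) (s := ball ρ 1) (bound := fun _ => C) (a := 0) (b := 1) (μ := volume)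
    (ball_mem_nhds ρ one_pos)
    (Eventually.of_forall fun x =>
      (by fun_prop : Continuous fun τ => τ ^ k * H (τ ^ 2 * x)).aestronglyMeasurable)
    (Aop_int hHc ρ 0 1)
    (by fun_prop : Continuous fun τ => τ ^ (k + 2) * H' (τ ^ 2 * ρ)).aestronglyMeasurable
    (Eventually.of_forall fun τ hτ x hx => ?_)
    (by simp)
    (Eventually.of_forall fun τ hτ x hx => ?_)
  · exact this.2
  · rw [uIoc_of_le zero_le_one] at hτ
    have hx' : |x| ≤ |ρ| + 1 := by
      rw [mem_ball, Real.dist_eq] at hx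
      have := abs_sub_abs_le_abs_sub x ρ
      linarith
    have h1 : |τ ^ 2 * x| ≤ |ρ| + 1 := by
      rw [abs_mul, abs_of_nonneg (sq_nonneg τ)]
      have : τ ^ 2 ≤ 1 := pow_le_one₀ hτ.1.le hτ.2
      nlinarith [abs_nonneg x]
    have h2 := hC _ (abs_le.1 h1)
    rw [norm_mul, Real.norm_of_nonneg (pow_nonneg hτ.1.le _)]
    have : τ ^ (k + 2) ≤ 1 := pow_le_one₀ hτ.1.le hτ.2
    nlinarith [norm_nonneg (H' (τ ^ 2 * x))]
  · have h1 : HasDerivAt (fun x : ℝ => τ ^ 2 * x) (τ ^ 2) x := by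
      simpa using (hasDerivAt_id x).const_mul (τ ^ 2)
    refine (((h (τ ^ 2 * x)).comp x h1).const_mul (τ ^ k)).congr_deriv ?_
    ring

theorem Aop_contDiff (n : ℕ) : ∀ (k : ℕ) (H : ℝ → ℝ), ContDiff ℝ n H → ContDiff ℝ n (Aop k H) := by
  induction n with
  | zero =>
    intro k H h
    exact contDiff_zero.2 (Aop_cont (contDiff_zero.1 h))
  | succ n ih =>
    intro k H h
    push_cast at h ⊢
    rw [contDiff_succ_iff_deriv] at h
    have hd : ∀ ρ, HasDerivAt (Aop k H) (Aop (k + 2) (deriv H) ρ) ρ :=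
      Aop_deriv (fun x => (h.1 x).hasDerivAt) h.2.2.continuous
    rw [contDiff_succ_iff_deriv]
    refine ⟨fun x => (hd x).differentiableAt, by simp, ?_⟩
    rw [show deriv (Aop k H) = Aop (k + 2) (deriv H) from funext fun x => (hd x).deriv]
    exact ih _ _ h.2.2

theorem Top_deriv {N : ℕ} {H : ℝ → ℝ} (hH : Continuous H) (ρ : ℝ) :
    HasDerivAt (Top' N H) (1 / 2 * Aop (N - 1) H ρ) ρ :=
  ((continuous_const.mul (Aop_cont hH)).integral_hasStrictDerivAt 0 ρ).hasDerivAt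

theorem Top_cont {N : ℕ} {H : ℝ → ℝ} (hH : Continuous H) : Continuous (Top' N H) :=
  continuous_iff_continuousAt.2 fun x => (Top_deriv hH x).continuousAt

theorem Top_contDiff {N n : ℕ} {H : ℝ → ℝ} (hH : ContDiff ℝ n H) :
    ContDiff ℝ ((n + 1 : ℕ)) (Top' N H) := by
  push_cast
  rw [contDiff_succ_iff_deriv]
  refine ⟨fun x => (Top_deriv hH.continuous x).differentiableAt, by simp, ?_⟩
  rw [show deriv (Top' N H) = fun ρ => 1 / 2 * Aop (N - 1) H ρ from
    funext fun x => (Top_deriv hH.continuous x).deriv]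
  exact contDiff_const.mul (Aop_contDiff n _ _ hH)

theorem Top_lap {N : ℕ} (hN : 1 ≤ N) {H H' : ℝ → ℝ} (h : ∀ x, HasDerivAt H (H' x) x)
    (hc : Continuous H') (ρ : ℝ) :
    4 * ρ * (1 / 2 * Aop (N - 1 + 2) H' ρ) + 2 * N * (1 / 2 * Aop (N - 1) H ρ) = H ρ := by
  have hHc : Continuous H := continuous_iff_continuousAt.2 fun x => (h x).continuousAt
  have := intervalIntegral.integral_eq_sub_of_hasDerivAt (a := 0) (b := 1)
    (f := fun τ => τ ^ N * H (τ ^ 2 * ρ))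
    (f' := fun τ => 2 * ρ * (τ ^ (N - 1 + 2) * H' (τ ^ 2 * ρ)) +
      N * (τ ^ (N - 1) * H (τ ^ 2 * ρ))) (fun τ _ => ?_)
    ((by fun_prop : Continuous fun τ => 2 * ρ * (τ ^ (N - 1 + 2) * H' (τ ^ 2 * ρ)) +
      N * (τ ^ (N - 1) * H (τ ^ 2 * ρ))).intervalIntegrable _ _)
  · rw [intervalIntegral.integral_add ((Aop_int hc ρ 0 1).const_mul _)
      ((Aop_int hHc ρ 0 1).const_mul _), intervalIntegral.integral_const_mul,
      intervalIntegral.integral_const_mul] at this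
    have h0 : (0 : ℝ) ^ N = 0 := zero_pow (by omega)
    simp only [one_pow, one_mul, h0, zero_mul, sub_zero] at this
    unfold Aop
    linarith
  · have h1 : HasDerivAt (fun τ : ℝ => τ ^ 2 * ρ) (2 * τ * ρ) τ := by
      simpa using (hasDerivAt_pow 2 τ).mul_const ρ
    refine ((hasDerivAt_pow N τ).mul ((h (τ ^ 2 * ρ)).comp τ h1)).congr_deriv ?_
    have e : τ ^ N = τ ^ (N - 1) * τ := by rw [← pow_succ]; congr 1; omega
    simp only [Function.comp, e, pow_add]
    ring

theorem Aop_pos {k : ℕ} {H : ℝ → ℝ} (hH : Continuous H) (hp : ∀ x, 0 < H x) (ρ : ℝ) :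
    0 < Aop k H ρ := by
  unfold Aop
  refine intervalIntegral.intervalIntegral_pos_of_pos_on (Aop_int hH ρ 0 1) (fun τ hτ => ?_) one_pos
  exact mul_pos (pow_pos hτ.1 _) (hp _)

theorem Aop_est {k : ℕ} {H : ℝ → ℝ} {c K : ℝ} (hc : 0 ≤ c)
    (hb : ∀ s, |H s| ≤ c * Real.cosh (K * s)) (ρ : ℝ) :
    |Aop k H ρ| ≤ c * Real.cosh (K * ρ) := by
  unfold Aop
  have := intervalIntegral.norm_integral_le_of_norm_le (a := 0) (b := 1) (μ := volume)
    (f := fun τ => τ ^ k * H (τ ^ 2 * ρ)) (g := fun _ => c * Real.cosh (K * ρ)) zero_le_one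
    (Eventually.of_forall fun τ hτ => ?_) (by simp)
  · simpa using this
  · rw [norm_mul, Real.norm_of_nonneg (pow_nonneg hτ.1.le _), Real.norm_eq_abs]
    have h1 : τ ^ k ≤ 1 := pow_le_one₀ hτ.1.le hτ.2
    have h2 : τ ^ 2 ≤ 1 := pow_le_one₀ hτ.1.le hτ.2
    have h3 := hb (τ ^ 2 * ρ)
    have h4 : Real.cosh (K * (τ ^ 2 * ρ)) ≤ Real.cosh (K * ρ) := by
      rw [Real.cosh_le_cosh, show K * (τ ^ 2 * ρ) = τ ^ 2 * (K * ρ) by ring, abs_mul,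
        abs_of_nonneg (sq_nonneg τ)]
      nlinarith [abs_nonneg (K * ρ)]
    have h5 := mul_le_mul_of_nonneg_left h4 hc
    nlinarith [abs_nonneg (H (τ ^ 2 * ρ))]

theorem Top_est {N : ℕ} {H : ℝ → ℝ} {c K : ℝ} (hc : 0 ≤ c) (hK : 0 < K)
    (hb : ∀ s, |H s| ≤ c * Real.cosh (K * s)) (ρ : ℝ) :
    |Top' N H ρ| ≤ c / K * Real.cosh (K * ρ) := by
  unfold Top'
  have hg : Continuous fun s => c * Real.cosh (K * s) :=
    continuous_const.mul (Real.continuous_cosh.comp (continuous_const.mul continuous_id))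
  have := intervalIntegral.norm_integral_le_abs_of_norm_le (a := 0) (b := ρ) (μ := volume)
    (f := fun s => 1 / 2 * Aop (N - 1) H s) (g := fun s => c * Real.cosh (K * s))
    (Eventually.of_forall fun s => ?_) (hg.intervalIntegrable _ _)
  · have e := intervalIntegral.integral_eq_sub_of_hasDerivAt (a := 0) (b := ρ)
      (f := fun s => c / K * Real.sinh (K * s)) (f' := fun s => c * Real.cosh (K * s))
      (fun s _ => by
        have h1 : HasDerivAt (fun s : ℝ => K * s) K s := by
          simpa using (hasDerivAt_id s).const_mul K
        refine (((Real.hasDerivAt_sinh (K * s)).comp s h1).const_mul (c / K)).congr_deriv ?_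
        field_simp) (hg.intervalIntegrable _ _)
    rw [e] at this
    simp only [mul_zero, Real.sinh_zero, sub_zero] at this
    refine this.trans ?_
    rw [abs_mul, abs_of_nonneg (by positivity)]
    refine mul_le_mul_of_nonneg_left ?_ (by positivity)
    rw [abs_le]
    have h1 := Real.cosh_sub_sinh (K * ρ)
    have h2 := Real.cosh_add_sinh (K * ρ)
    constructor <;> nlinarith [Real.exp_pos (-(K * ρ)), Real.exp_pos (K * ρ)]
  · have := Aop_est (k := N - 1) hc hb s
    rw [Real.norm_eq_abs, abs_mul, abs_of_nonneg (by norm_num : (0 : ℝ) ≤ 1 / 2)]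
    nlinarith [abs_nonneg (Aop (N - 1) H s)]

theorem Top_sub {N : ℕ} {F G : ℝ → ℝ} (hF : Continuous F) (hG : Continuous G) (ρ : ℝ) :
    Top' N F ρ - Top' N G ρ = Top' N (fun s => F s - G s) ρ := by
  unfold Top'
  have hi : ∀ H : ℝ → ℝ, Continuous H →
      IntervalIntegrable (fun s => 1 / 2 * Aop (N - 1) H s) volume 0 ρ := fun H hH =>
    (continuous_const.mul (Aop_cont hH)).intervalIntegrable _ _
  rw [← intervalIntegral.integral_sub (hi F hF) (hi G hG)]
  congr 1; funext τ
  rw [← Aop_sub hF hG]; ring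

theorem abs_le_cosh {K : ℝ} (hK : 1 ≤ K) (s : ℝ) : |s| ≤ Real.cosh (K * s) := by
  have h1 : |K * s| ≤ Real.sinh |K * s| := Real.self_le_sinh_iff.2 (abs_nonneg _)
  have h2 := Real.sinh_lt_cosh |K * s|
  rw [Real.cosh_abs] at h2
  have h3 : |s| ≤ |K * s| := by
    rw [abs_mul, abs_of_nonneg (by linarith : (0:ℝ) ≤ K)]
    nlinarith [abs_nonneg s]
  linarith

theorem exists_g : ∃ (g : ℝ → ℝ) (L : NNReal), ContDiff ℝ 4 g ∧ (∀ v, 0 < g v ∧ g v ≤ 4) ∧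
    LipschitzWith L g ∧ ∀ v, 1 ≤ v → g v = 1 / v ^ 2 := by
  set s : ℝ → ℝ := fun v => Real.smoothTransition (2 * v - 1) with hs
  have hsc : ContDiff ℝ 4 s := by
    have h1 : ContDiff ℝ 4 Real.smoothTransition := Real.smoothTransition.contDiff (n := 4)
    exact h1.comp (by fun_prop)
  set g : ℝ → ℝ := fun v => s v / v ^ 2 + (1 - s v) with hg
  have hs0 : ∀ v ≤ 1 / 2, s v = 0 := fun v hv =>
    Real.smoothTransition.zero_of_nonpos (by linarith)
  have hs1 : ∀ v, 1 ≤ v → s v = 1 := fun v hv =>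
    Real.smoothTransition.one_of_one_le (by linarith)
  have hg1 : ∀ v, 1 ≤ v → g v = 1 / v ^ 2 := fun v hv => by simp [hg, hs1 v hv]
  have hg0 : ∀ v ≤ 1 / 2, g v = 1 := fun v hv => by simp [hg, hs0 v hv]
  have hgc : ContDiff ℝ 4 g := by
    refine contDiff_iff_contDiffAt.2 fun v => ?_
    by_cases hv : v < 1 / 2
    · have : g =ᶠ[𝓝 v] fun _ => 1 := by
        filter_upwards [Iio_mem_nhds hv] with x hx
        exact hg0 x (le_of_lt hx)
      exact contDiffAt_const.congr_of_eventuallyEq this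
    · have hv' : v ^ 2 ≠ 0 := by
        have : 0 < v := by push Not at hv; linarith
        positivity
      have hq : ContDiffAt ℝ 4 (fun x : ℝ => x ^ 2) v := (contDiff_id.pow 2).contDiffAt
      exact (hsc.contDiffAt.div hq hv').add (contDiffAt_const.sub hsc.contDiffAt)
  have hd : Continuous (deriv g) := (hgc.of_le (by norm_num : (1 : WithTop ℕ∞) ≤ 4)).continuous_deriv le_rfl
  obtain ⟨C, hC⟩ := (isCompact_Icc (a := (1 / 2 : ℝ)) (b := 1)).exists_bound_of_continuousOn
    hd.continuousOn
  refine ⟨g, Real.toNNReal (max C 2), hgc, ?_, ?_, hg1⟩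
  · intro v
    by_cases hv : v ≤ 1 / 2
    · rw [hg0 v hv]; norm_num
    · push Not at hv
      have a : 0 ≤ s v := Real.smoothTransition.nonneg _
      have b : s v ≤ 1 := Real.smoothTransition.le_one _
      have c : 1 / v ^ 2 ≤ 4 := by
        rw [div_le_iff₀ (by positivity)]; nlinarith
      have d : 0 < 1 / v ^ 2 := by positivity
      have e : g v = s v * (1 / v ^ 2) + (1 - s v) := by simp only [hg]; ring
      rw [e]
      constructor
      · rcases a.eq_or_lt with h | h
        · rw [← h]; norm_num
        · have := mul_pos h d; linarith
      · nlinarith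
  · refine lipschitzWith_of_nnnorm_deriv_le (hgc.differentiable (by norm_num)) fun v => ?_
    rw [← NNReal.coe_le_coe, coe_nnnorm, Real.coe_toNNReal _ (le_max_of_le_right (by norm_num))]
    rcases lt_or_ge v (1 / 2) with hv | hv
    · have : g =ᶠ[𝓝 v] fun _ => 1 := by
        filter_upwards [Iio_mem_nhds hv] with x hx
        exact hg0 x (le_of_lt hx)
      rw [this.deriv_eq]; simp
    · rcases le_or_gt v 1 with hv1 | hv1
      · exact (hC v ⟨hv, hv1⟩).trans (le_max_left _ _)
      · have : g =ᶠ[𝓝 v] fun x => x ^ (-2 : ℤ) := by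
          filter_upwards [Ioi_mem_nhds hv1] with x hx
          rw [hg1 x (le_of_lt hx), zpow_neg, one_div]; norm_cast
        rw [this.deriv_eq]
        refine le_trans ?_ (le_max_right _ _)
        have h0 : v ≠ 0 := by linarith
        rw [(hasDerivAt_zpow (-2) v (Or.inl h0)).deriv, norm_mul]
        have h3 : ‖v ^ (-2 - 1 : ℤ)‖ ≤ 1 := by
          rw [show (-2 - 1 : ℤ) = -(3 : ℕ) by norm_num, zpow_neg, norm_inv, zpow_natCast, norm_pow,
            Real.norm_of_nonneg (by linarith)]
          exact inv_le_one_of_one_le₀ (one_le_pow₀ hv1.le)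
        have h4 : ‖((-2 : ℤ) : ℝ)‖ = 2 := by norm_num
        rw [h4]; linarith

theorem shoot {N : ℕ} (hN : 1 ≤ N) {g : ℝ → ℝ} {L : NNReal} (hb : ∀ v, 0 < g v ∧ g v ≤ 4)
    (hL : LipschitzWith L g) : ∃ (V : ℝ → ℝ → ℝ) (K : ℝ), 0 < K ∧ (∀ β, Continuous (V β)) ∧
      (∀ β ρ, V β ρ = 1 + β * ρ / (2 * N) - Top' N (Top' N (fun s => g (V β s))) ρ) ∧
      ∀ β β' ρ, |V β ρ - V β' ρ| ≤ 2 * |β - β'| * Real.cosh (K * ρ) := by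
  have hgc : Continuous g := hL.continuous
  set K : ℝ := L + 2 with hK
  have hL0 : (0 : ℝ) ≤ L := L.2
  have hK1 : 1 ≤ K := by linarith
  have hK0 : 0 < K := by linarith
  have hNR : (1 : ℝ) ≤ N := by exact_mod_cast hN
  have hcc : Continuous fun ρ => Real.cosh (K * ρ) :=
    Real.continuous_cosh.comp (continuous_const.mul continuous_id)
  have hcp : ∀ ρ, 0 < Real.cosh (K * ρ) := fun ρ => Real.cosh_pos _
  have hc1 : ∀ ρ, 1 ≤ Real.cosh (K * ρ) := fun ρ => Real.one_le_cosh _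
  let U : ℝ → (BoundedContinuousFunction ℝ ℝ) → ℝ → ℝ := fun β h ρ =>
    1 + β * ρ / (2 * N) - Real.cosh (K * ρ) * h ρ
  have hUc : ∀ β h, Continuous (U β h) := fun β h =>
    (by fun_prop : Continuous fun ρ : ℝ => 1 + β * ρ / (2 * N)).sub (hcc.mul h.continuous)
  have hgU : ∀ β h, Continuous fun s => g (U β h s) := fun β h => hgc.comp (hUc β h)
  have hbd : ∀ β h ρ, |Top' N (Top' N (fun s => g (U β h s))) ρ| ≤ 4 / K / K * Real.cosh (K * ρ) := by
    intro β h
    refine Top_est (by positivity) hK0 (Top_est (by norm_num) hK0 fun s => ?_)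
    rw [abs_of_pos (hb _).1]
    linarith [(hb (U β h s)).2, hc1 s]
  let Φ : ℝ → (BoundedContinuousFunction ℝ ℝ) → (BoundedContinuousFunction ℝ ℝ) := fun β h =>
    BoundedContinuousFunction.ofNormedAddCommGroup
      (fun ρ => Top' N (Top' N (fun s => g (U β h s))) ρ / Real.cosh (K * ρ))
      ((Top_cont (Top_cont (hgU β h))).div hcc fun ρ => (hcp ρ).ne') (4 / K / K) (by
        intro ρ
        rw [norm_div, Real.norm_eq_abs, Real.norm_of_nonneg (hcp ρ).le, div_le_iff₀ (hcp ρ)]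
        exact hbd β h ρ)
  have hlin : ∀ β β' ρ : ℝ, |β * ρ / (2 * N) - β' * ρ / (2 * N)| ≤ |β - β'| * Real.cosh (K * ρ) := by
    intro β β' ρ
    rw [show β * ρ / (2 * N) - β' * ρ / (2 * N) = (β - β') * (ρ / (2 * N)) by ring, abs_mul]
    refine mul_le_mul_of_nonneg_left ?_ (abs_nonneg _)
    rw [abs_div, abs_of_pos (by positivity : (0 : ℝ) < 2 * N)]
    refine (div_le_self (abs_nonneg _) (by linarith)).trans (abs_le_cosh hK1 ρ)
  have hdiff : ∀ β β' h h', dist (Φ β h) (Φ β' h') ≤ L / K / K * (|β - β'| + dist h h') := by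
    intro β β' h h'
    rw [BoundedContinuousFunction.dist_le (by positivity)]
    intro ρ
    show dist (Top' N (Top' N (fun s => g (U β h s))) ρ / Real.cosh (K * ρ))
      (Top' N (Top' N (fun s => g (U β' h' s))) ρ / Real.cosh (K * ρ)) ≤ _
    rw [Real.dist_eq, ← sub_div, Top_sub (Top_cont (hgU β h)) (Top_cont (hgU β' h'))]
    simp only [Top_sub (hgU β h) (hgU β' h')]
    rw [abs_div, abs_of_pos (hcp ρ), div_le_iff₀ (hcp ρ)]
    have e : L / K / K * (|β - β'| + dist h h') = L * (|β - β'| + dist h h') / K / K := by ring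
    rw [e]
    refine Top_est (by positivity) hK0 (Top_est (by positivity) hK0 fun s => ?_) ρ
    have h1 := hL.dist_le_mul (U β h s) (U β' h' s)
    rw [Real.dist_eq, Real.dist_eq] at h1
    refine h1.trans ?_
    rw [mul_assoc]
    refine mul_le_mul_of_nonneg_left ?_ hL0
    have h2 : U β h s - U β' h' s = (β * s / (2 * N) - β' * s / (2 * N)) -
      Real.cosh (K * s) * (h s - h' s) := by simp only [U]; ring
    rw [h2]
    refine (abs_sub _ _).trans ?_
    have h3 := hlin β β' s
    have h4 : |h s - h' s| ≤ dist h h' := by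
      rw [← Real.dist_eq]; exact BoundedContinuousFunction.dist_coe_le_dist s
    rw [abs_mul, abs_of_pos (hcp s)]
    nlinarith [hcp s]
  have hLK : L / K / K ≤ 1 / 2 := by
    rw [div_div, div_le_iff₀ (by positivity)]; nlinarith
  have hcon : ∀ β, ContractingWith (1 / 2) (Φ β) := by
    intro β
    refine ⟨by rw [← NNReal.coe_lt_coe]; norm_num, LipschitzWith.of_dist_le_mul fun h h' => ?_⟩
    have := hdiff β β h h'
    simp only [sub_self, abs_zero, zero_add] at this
    refine this.trans (mul_le_mul_of_nonneg_right ?_ dist_nonneg)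
    simpa using hLK
  let H : ℝ → (BoundedContinuousFunction ℝ ℝ) := fun β => ContractingWith.fixedPoint (Φ β) (hcon β)
  have hfix : ∀ β, Φ β (H β) = H β := fun β => (hcon β).fixedPoint_isFixedPt
  have hHd : ∀ β β', dist (H β) (H β') ≤ |β - β'| := by
    intro β β'
    have := ContractingWith.fixedPoint_lipschitz_in_map (hcon β) (hcon β') (C := 1 / 2 * |β - β'|)
      (fun z => by
        have := hdiff β β' z z
        rw [dist_self, add_zero] at this
        exact this.trans (mul_le_mul_of_nonneg_right hLK (abs_nonneg _)))
    refine this.trans (le_of_eq ?_)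
    push_cast; ring
  refine ⟨fun β => U β (H β), K, hK0, fun β => hUc _ _, fun β ρ => ?_, fun β β' ρ => ?_⟩
  · have h1 : H β ρ = Top' N (Top' N (fun s => g (U β (H β) s))) ρ / Real.cosh (K * ρ) := by
      conv_lhs => rw [← hfix β]
      rfl
    show 1 + β * ρ / (2 * N) - Real.cosh (K * ρ) * H β ρ = _
    rw [h1]
    congr 1
    field_simp [(hcp ρ).ne']
  · have h2 : U β (H β) ρ - U β' (H β') ρ = (β * ρ / (2 * N) - β' * ρ / (2 * N)) -
      Real.cosh (K * ρ) * (H β ρ - H β' ρ) := by simp only [U]; ring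
    show |U β (H β) ρ - U β' (H β') ρ| ≤ _
    rw [h2]
    refine (abs_sub _ _).trans ?_
    have h3 := hlin β β' ρ
    have h4 : |H β ρ - H β' ρ| ≤ |β - β'| := by
      rw [← Real.dist_eq]
      exact (BoundedContinuousFunction.dist_coe_le_dist ρ).trans (hHd β β')
    rw [abs_mul, abs_of_pos (hcp ρ)]
    nlinarith [hcp ρ]

theorem exists_profile {N : ℕ} (hN : 1 ≤ N) {P : ℝ} (hP : 0 < P) :
    ∃ (V V1 V2 Q Q1 G G1 : ℝ → ℝ) (β : ℝ), ContDiff ℝ 4 V ∧ V 0 = 1 ∧ V1 P = 0 ∧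
      (∀ ρ, HasDerivAt V (V1 ρ) ρ) ∧ (∀ ρ, HasDerivAt V1 (V2 ρ) ρ) ∧ (∀ ρ, V2 ρ < 0) ∧
      (∀ ρ, 4 * ρ * V2 ρ + 2 * N * V1 ρ = β - Q ρ) ∧
      (∀ ρ, HasDerivAt Q (Q1 ρ) ρ) ∧ (∀ ρ, HasDerivAt Q1 (G1 ρ) ρ) ∧
      (∀ ρ, 4 * ρ * G1 ρ + 2 * N * Q1 ρ = G ρ) ∧ (∀ ρ, 1 ≤ V ρ → G ρ = 1 / V ρ ^ 2) := by
  obtain ⟨g, L, hgc, hgb, hgL, hg1⟩ := exists_g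
  obtain ⟨V, K, hK, hVc, hVe, hVl⟩ := shoot hN hgb hgL
  have hN0 : (0 : ℝ) < N := by exact_mod_cast hN
  have hVe' : ∀ β, V β = fun ρ => 1 + β * ρ / (2 * N) - Top' N (Top' N (fun s => g (V β s))) ρ :=
    fun β => funext (hVe β)
  have hGc : ∀ β, Continuous fun s => g (V β s) := fun β => hgL.continuous.comp (hVc β)
  have hQd : ∀ β ρ, HasDerivAt (Top' N (fun s => g (V β s)))
      (1 / 2 * Aop (N - 1) (fun s => g (V β s)) ρ) ρ := fun β ρ => Top_deriv (hGc β) ρ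
  have hQ1c : ∀ β, Continuous fun ρ => 1 / 2 * Aop (N - 1) (fun s => g (V β s)) ρ := fun β =>
    continuous_const.mul (Aop_cont (hGc β))
  have hlin : ∀ β ρ : ℝ, HasDerivAt (fun ρ : ℝ => 1 + β * ρ / (2 * N)) (β / (2 * N)) ρ := by
    intro β ρ
    have := (((hasDerivAt_id ρ).const_mul β).div_const (2 * (N : ℝ))).const_add 1
    simpa using this
  let W1 : ℝ → ℝ → ℝ := fun β ρ =>
    β / (2 * N) - 1 / 2 * Aop (N - 1) (Top' N (fun s => g (V β s))) ρ
  let W2 : ℝ → ℝ → ℝ := fun β ρ =>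
    - (1 / 2 * Aop (N - 1 + 2) (fun ρ => 1 / 2 * Aop (N - 1) (fun s => g (V β s)) ρ) ρ)
  have hd1 : ∀ β ρ, HasDerivAt (V β) (W1 β ρ) ρ := by
    intro β ρ
    have := (hlin β ρ).sub (Top_deriv (N := N) (Top_cont (N := N) (hGc β)) ρ)
    exact this.congr_of_eventuallyEq (Eventually.of_forall fun x => hVe β x)
  have hd2 : ∀ β ρ, HasDerivAt (W1 β) (W2 β ρ) ρ := by
    intro β ρ
    exact ((Aop_deriv (k := N - 1) (hQd β) (hQ1c β) ρ).const_mul (1 / 2)).const_sub _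
  have hneg : ∀ β ρ, W2 β ρ < 0 := by
    intro β ρ
    have h1 : ∀ s, 0 < 1 / 2 * Aop (N - 1) (fun s => g (V β s)) s := fun s =>
      mul_pos (by norm_num) (Aop_pos (hGc β) (fun _ => (hgb _).1) s)
    have := Aop_pos (k := N - 1 + 2) (hQ1c β) h1 ρ
    simp only [W2]; linarith
  have hanti : ∀ β, StrictAnti (W1 β) := fun β =>
    strictAnti_of_hasDerivAt_neg (hd2 β) (hneg β)
  have hQ0 : ∀ β, Top' N (fun s => g (V β s)) 0 = 0 := fun β => by simp [Top']
  have hW10 : ∀ β, W1 β 0 = β / (2 * N) := by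
    intro β
    simp [W1, Aop, hQ0]
  -- continuity in the parameter
  have hcp : 0 < Real.cosh (K * P) := Real.cosh_pos _
  set c : ℝ := 2 * L / K * Real.cosh (K * P) with hc
  have hL0 : (0 : ℝ) ≤ L := L.2
  have hAd : ∀ β β', |Aop (N - 1) (Top' N (fun s => g (V β s))) P -
      Aop (N - 1) (Top' N (fun s => g (V β' s))) P| ≤ c * |β - β'| := by
    intro β β'
    rw [Aop_sub (Top_cont (hGc β)) (Top_cont (hGc β'))]
    simp only [Top_sub (hGc β) (hGc β')]
    have e : c * |β - β'| = L * (2 * |β - β'|) / K * Real.cosh (K * P) := by rw [hc]; ring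
    rw [e]
    refine Aop_est (by positivity) (Top_est (by positivity) hK fun s => ?_) P
    have h1 := hgL.dist_le_mul (V β s) (V β' s)
    rw [Real.dist_eq, Real.dist_eq] at h1
    refine h1.trans ?_
    rw [mul_assoc]
    exact mul_le_mul_of_nonneg_left (hVl β β' s) hL0
  have hcont : Continuous fun β => W1 β P := by
    have : Continuous fun β => Aop (N - 1) (Top' N (fun s => g (V β s))) P := by
      refine LipschitzWith.continuous (K := Real.toNNReal c) (LipschitzWith.of_dist_le_mul ?_)
      intro β β'
      rw [Real.coe_toNNReal c (by positivity)]
      exact hAd β β'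
    exact (continuous_id.div_const _).sub (continuous_const.mul this)
  set B : ℝ := 4 / K * Real.cosh (K * P) with hB
  have hBp : 0 < B := by positivity
  have hAb : ∀ β, |Aop (N - 1) (Top' N (fun s => g (V β s))) P| ≤ B := by
    intro β
    refine Aop_est (by positivity) (Top_est (by norm_num) hK fun s => ?_) P
    rw [abs_of_pos (hgb _).1]
    linarith [(hgb (V β s)).2, Real.one_le_cosh (K * s)]
  have hlo : W1 0 P ≤ 0 := by
    have := hanti 0 hP
    rw [hW10] at this
    simp at this
    exact this.le
  have hhi : 0 ≤ W1 (2 * N * B) P := by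
    have := (abs_le.1 (hAb (2 * N * B))).2
    have e : (2 * N * B) / (2 * (N : ℝ)) = B := by field_simp
    simp only [W1]
    rw [e]; linarith
  obtain ⟨β, -, hβ⟩ := intermediate_value_Icc (by positivity : 0 ≤ 2 * (N : ℝ) * B)
    hcont.continuousOn ⟨hlo, hhi⟩
  have hboot : ∀ n : ℕ, n ≤ 4 → ContDiff ℝ n (V β) →
      ContDiff ℝ ((n + 1 + 1 : ℕ)) (V β) := by
    intro n hn h
    have h1 : ContDiff ℝ n (fun s => g (V β s)) :=
      (hgc.of_le (by exact_mod_cast hn)).comp h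
    have h2 : ContDiff ℝ ((n + 1 + 1 : ℕ)) (Top' N (Top' N (fun s => g (V β s)))) :=
      Top_contDiff (Top_contDiff h1)
    rw [hVe' β]
    exact (by fun_prop : ContDiff ℝ ((n + 1 + 1 : ℕ)) fun ρ : ℝ => 1 + β * ρ / (2 * N)).sub h2
  have hV4 : ContDiff ℝ 4 (V β) :=
    hboot 2 (by norm_num) (hboot 0 (by norm_num) (contDiff_zero.2 (hVc β)))
  have hG4 : ContDiff ℝ 4 (fun s => g (V β s)) := hgc.comp hV4
  have hGd : ∀ s, HasDerivAt (fun s => g (V β s)) (deriv (fun s => g (V β s)) s) s := fun s =>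
    ((hG4.differentiable (by norm_num)) s).hasDerivAt
  have hGdc : Continuous (deriv fun s => g (V β s)) := hG4.continuous_deriv (by norm_num)
  refine ⟨V β, W1 β, W2 β, Top' N (fun s => g (V β s)),
    fun ρ => 1 / 2 * Aop (N - 1) (fun s => g (V β s)) ρ, fun s => g (V β s),
    fun ρ => 1 / 2 * Aop (N - 1 + 2) (deriv fun s => g (V β s)) ρ, β, hV4, ?_, hβ, hd1 β, hd2 β,
    hneg β, ?_, hQd β, ?_, ?_, fun ρ h => hg1 _ h⟩
  · rw [hVe]; simp [Top']
  · intro ρ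
    have := Top_lap hN (hQd β) (hQ1c β) ρ
    have e : 2 * (N : ℝ) * (β / (2 * N)) = β := by field_simp
    simp only [W1, W2]
    linarith
  · intro ρ
    exact (Aop_deriv (k := N - 1) hGd hGdc ρ).const_mul (1 / 2)
  · intro ρ
    exact Top_lap hN hGd hGdc ρ

theorem exists_sol {N : ℕ} (hN : 1 ≤ N) {P : ℝ} (hP : 0 < P) :
    ∃ (M : ℝ) (u : EuclideanSpace ℝ (Fin N) → ℝ), 1 < M ∧ IsClassicalSolution N (P ^ 2 / M ^ 3) u ∧
      u 0 = 1 - 1 / M ∧ ∀ x ∈ ball (0 : EuclideanSpace ℝ (Fin N)) 1, ∀ y, ‖x‖ = ‖y‖ → u x = u y := by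
  obtain ⟨V, V1, V2, Q, Q1, G, G1, β, hV4, hV0, hV1P, hd1, hd2, hneg, hlap, hQ, hQ1, hG, hGe⟩ :=
    exists_profile hN hP
  have hanti : StrictAnti V1 := strictAnti_of_hasDerivAt_neg hd2 hneg
  have hmono : StrictMonoOn V (Icc 0 P) := by
    refine strictMonoOn_of_deriv_pos (convex_Icc 0 P) hV4.continuous.continuousOn fun x hx => ?_
    rw [interior_Icc] at hx
    rw [(hd1 x).deriv, ← hV1P]
    exact hanti hx.2
  have h0m : (0 : ℝ) ∈ Icc 0 P := ⟨le_rfl, hP.le⟩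
  have hPm : P ∈ Icc 0 P := ⟨hP.le, le_rfl⟩
  set M := V P with hM
  have hM1 : 1 < M := by rw [← hV0]; exact hmono h0m hPm hP
  have hM0 : 0 < M := by linarith
  have hxm : ∀ x : EuclideanSpace ℝ (Fin N), x ∈ ball (0 : EuclideanSpace ℝ (Fin N)) 1 →
      P * ‖x‖ ^ 2 ∈ Ico 0 P := by
    intro x hx
    rw [mem_ball_zero_iff] at hx
    refine ⟨by positivity, ?_⟩
    have : ‖x‖ ^ 2 < 1 := by nlinarith [norm_nonneg x]
    nlinarith
  have hV1 : ∀ x : EuclideanSpace ℝ (Fin N), x ∈ ball (0 : EuclideanSpace ℝ (Fin N)) 1 →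
      1 ≤ V (P * ‖x‖ ^ 2) := by
    intro x hx
    rw [← hV0]
    exact hmono.monotoneOn h0m ⟨(hxm x hx).1, (hxm x hx).2.le⟩ (hxm x hx).1
  have hVM : ∀ x : EuclideanSpace ℝ (Fin N), x ∈ ball (0 : EuclideanSpace ℝ (Fin N)) 1 →
      V (P * ‖x‖ ^ 2) < M := by
    intro x hx
    exact hmono ⟨(hxm x hx).1, (hxm x hx).2.le⟩ hPm (hxm x hx).2
  set u : EuclideanSpace ℝ (Fin N) → ℝ := fun x => 1 - V (P * ‖x‖ ^ 2) / M with hu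
  have hmul : ∀ ρ : ℝ, HasDerivAt (fun ρ : ℝ => P * ρ) P ρ := fun ρ => by
    simpa using (hasDerivAt_id ρ).const_mul P
  have hW : ∀ ρ, HasDerivAt (fun ρ => 1 - V (P * ρ) / M) (-(V1 (P * ρ) * P / M)) ρ := fun ρ =>
    (((hd1 (P * ρ)).comp ρ (hmul ρ)).div_const M).const_sub 1
  have hW1 : ∀ ρ, HasDerivAt (fun ρ => -(V1 (P * ρ) * P / M)) (-(V2 (P * ρ) * P * P / M)) ρ := fun ρ =>
    ((((hd2 (P * ρ)).comp ρ (hmul ρ)).mul_const P).div_const M).neg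
  have hlapu : ∀ x, lap u x = -(P / M) * (β - Q (P * ‖x‖ ^ 2)) := by
    intro x
    rw [lap_radial (W := fun ρ => 1 - V (P * ρ) / M) (EventuallyEq.refl _ _)
      (Eventually.of_forall hW) (hW1 _), ← hlap]
    ring
  have hX : ∀ ρ, HasDerivAt (fun ρ => -(P / M) * (β - Q (P * ρ))) (-(P / M) * -(Q1 (P * ρ) * P)) ρ :=
    fun ρ => ((((hQ (P * ρ)).comp ρ (hmul ρ))).const_sub β).const_mul _
  have hX1 : ∀ ρ, HasDerivAt (fun ρ => -(P / M) * -(Q1 (P * ρ) * P))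
      (-(P / M) * -(G1 (P * ρ) * P * P)) ρ :=
    fun ρ => ((((hQ1 (P * ρ)).comp ρ (hmul ρ))).mul_const P).neg.const_mul _
  have hbi : ∀ x, biharm u x = P ^ 2 / M * G (P * ‖x‖ ^ 2) := by
    intro x
    unfold biharm
    rw [lap_radial (W := fun ρ => -(P / M) * (β - Q (P * ρ)))
      (Eventually.of_forall hlapu) (Eventually.of_forall hX) (hX1 _), ← hG]
    ring
  have hu4 : ContDiff ℝ 4 u := by
    refine contDiff_const.sub (ContDiff.div_const (hV4.comp ?_) M)
    exact contDiff_const.mul (contDiff_norm_sq ℝ)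
  refine ⟨M, u, hM1, ⟨hu4.contDiffOn, ?_, ?_, ?_, ?_, ?_⟩, by simp [hu, hV0], ?_⟩
  · intro x hx
    have := (div_lt_one hM0).2 (hVM x hx)
    simp only [hu]; linarith
  · intro x hx
    have : 0 < V (P * ‖x‖ ^ 2) / M := div_pos (by linarith [hV1 x hx]) hM0
    simp only [hu]; linarith
  · intro x hx
    have h1 := hV1 x hx
    rw [hbi, hGe _ h1]
    have h2 : V (P * ‖x‖ ^ 2) ≠ 0 := by linarith
    have h3 : M ≠ 0 := hM0.ne'
    have e : 1 - u x = V (P * ‖x‖ ^ 2) / M := by simp [hu]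
    rw [e]
    clear_value M
    generalize V (P * ‖x‖ ^ 2) = v at h2
    field_simp
  · intro x hx
    simp only [hu, hx]
    simp [← hM, hM0.ne']
  · intro x hx
    have hx' : x ∈ closedBall (0 : EuclideanSpace ℝ (Fin N)) 1 := by simp [hx]
    have huq : UniqueDiffWithinAt ℝ (closedBall (0 : EuclideanSpace ℝ (Fin N)) 1) x :=
      uniqueDiffOn_convex (convex_closedBall _ _) (by
        rw [interior_closedBall _ one_ne_zero]; exact ⟨0, by simp⟩) x hx'
    have h1 := ((hW (‖x‖ ^ 2)).comp_hasFDerivAt x (hasFDerivAt_normsq x))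
    have h2 : HasFDerivAt u _ x := h1
    rw [h2.hasFDerivWithinAt.fderivWithin huq]
    simp [hx, hV1P]
  · intro x _ y hxy
    simp only [hu, hxy]

theorem exists_large {N : ℕ} (hN : 9 ≤ N) {M0 : ℝ} (hM0 : 0 < M0) :
    ∃ (M lam : ℝ) (W W1 : ℝ → ℝ), M0 < M ∧ lam ∈ solSet N ∧ RSol N lam W W1 (1 - 1 / M) := by
  have hl := lamP_pos hN
  obtain ⟨M, u, hM, hu, h0, hr⟩ := exists_sol (N := N) (by omega)
    (P := √(lamP N * M0 ^ 3)) (Real.sqrt_pos.2 (by positivity))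
  rw [Real.sq_sqrt (by positivity)] at hu
  have hlam : 0 < lamP N * M0 ^ 3 / M ^ 3 := by positivity
  obtain ⟨W, W1, hW, -⟩ := rsol_of_radial hN hlam hu hr
  have h1 := hW.lam_lt hN
  rw [div_lt_iff₀ (by positivity)] at h1
  have h2 : M0 ^ 3 < M ^ 3 := lt_of_mul_lt_mul_left h1 hl.le
  refine ⟨M, _, W, W1, lt_of_pow_lt_pow_left₀ 3 (by linarith) h2, ⟨hlam, u, hu⟩, ?_⟩
  rw [← h0]; exact hW

theorem RSol.zero_le {N : ℕ} (hN : 9 ≤ N) {lam u0 v0 : ℝ} {W W1 V V1 : ℝ → ℝ}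
    (h : RSol N lam W W1 u0) (k : RSol N lam V V1 v0) : u0 ≤ v0 := by
  refine le_of_tendsto_of_tendsto h.zero k.zero ?_
  filter_upwards [Ioo_mem_nhdsGT (zero_lt_one' ℝ)] with ρ hρ
  exact h.le_of_same hN k ρ ⟨hρ.1, hρ.2.le⟩

theorem final_aux (N : ℕ) (hN : 9 ≤ N)
    (uMin : ℝ → EuclideanSpace ℝ (Fin N) → ℝ)
    (hMin : ∀ lam : ℝ, 0 < lam → lam < sSup (solSet N) →
      IsClassicalSolution N lam (uMin lam) ∧
        ∀ v, IsClassicalSolution N lam v →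
          ∀ x ∈ ball (0 : EuclideanSpace ℝ (Fin N)) 1, uMin lam x ≤ v x)
    (hMono : ∀ x ∈ ball (0 : EuclideanSpace ℝ (Fin N)) 1, ∀ l₁ l₂ : ℝ,
      0 < l₁ → l₁ ≤ l₂ → l₂ < sSup (solSet N) → uMin l₁ x ≤ uMin l₂ x)
    (uStar : EuclideanSpace ℝ (Fin N) → ℝ)
    (hStar : ∀ x ∈ ball (0 : EuclideanSpace ℝ (Fin N)) 1,
      Tendsto (fun lam => uMin lam x) (nhdsWithin (sSup (solSet N)) (Iio (sSup (solSet N))))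
        (nhds (uStar x)))
    :
    sSup (uStar '' ball (0 : EuclideanSpace ℝ (Fin N)) 1) = 1 ∧
      ∀ x ∈ ball (0 : EuclideanSpace ℝ (Fin N)) 1,
        1 - (sSup (solSet N) / lamBar N) ^ ((1 : ℝ) / 3) * ‖x‖ ^ ((4 : ℝ) / 3) ≤ uStar x ∧
          uStar x ≤ 1 - ‖x‖ ^ ((4 : ℝ) / 3) := by
  have hlb := lamBar_pos hN
  have hbdd := solSet_bdd N
  have hls0 : 0 < sSup (solSet N) := by
    obtain ⟨M, lam, W, W1, -, hm, hW⟩ := exists_large hN one_pos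
    exact lt_of_lt_of_le hW.lam_pos (le_csSup hbdd hm)
  have hle : ∀ lam ∈ solSet N, lam ≤ sSup (solSet N) := fun lam h => le_csSup hbdd h
  set ls := sSup (solSet N) with hls
  have hR : ∀ lam, 0 < lam → lam < ls → ∃ W W1, RSol N lam W W1 (uMin lam 0) ∧
      ∀ x ∈ ball (0 : EuclideanSpace ℝ (Fin N)) 1, uMin lam x = W (‖x‖ ^ 2) := by
    intro lam h0 h1
    obtain ⟨a, b⟩ := hMin lam h0 h1
    exact rsol_of_radial hN h0 a (radial_of_min a b)
  have h0b : (0 : EuclideanSpace ℝ (Fin N)) ∈ ball (0 : EuclideanSpace ℝ (Fin N)) 1 := by simp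
  have hev : ∀ a < ls, ∀ᶠ lam in 𝓝[<] ls, lam ∈ Ioo a ls := fun a ha => Ioo_mem_nhdsLT ha
  have hleS : ∀ x ∈ ball (0 : EuclideanSpace ℝ (Fin N)) 1, ∀ lam, 0 < lam → lam < ls →
      uMin lam x ≤ uStar x := by
    intro x hx lam h0 h1
    refine ge_of_tendsto (hStar x hx) ?_
    filter_upwards [hev lam h1] with l hl
    exact hMono x hx lam l h0 hl.1.le hl.2
  have hS1 : ∀ x ∈ ball (0 : EuclideanSpace ℝ (Fin N)) 1, uStar x ≤ 1 := by
    intro x hx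
    refine le_of_tendsto (hStar x hx) ?_
    filter_upwards [hev 0 hls0] with l hl
    exact ((hMin l hl.1 hl.2).1.lt_one x hx).le
  have hkey : ∀ ε > 0, ∃ lam, 0 < lam ∧ lam < ls ∧ 1 - ε < uMin lam 0 := by
    intro ε hε
    have hfin : ∀ M lam W W1, 1 / ε < M → lam < ls → RSol N lam W W1 (1 - 1 / M) →
        ∃ lam, 0 < lam ∧ lam < ls ∧ 1 - ε < uMin lam 0 := by
      intro M lam W W1 hM hl hW
      refine ⟨lam, hW.lam_pos, hl, ?_⟩
      obtain ⟨V, V1, hV, -⟩ := hR lam hW.lam_pos hl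
      have h1 := hW.zero_le hN hV
      have hM0 : 0 < M := lt_trans (by positivity) hM
      have h2 : 1 / M < ε := by
        rw [div_lt_iff₀ hε] at hM
        rw [div_lt_iff₀ hM0]; linarith
      linarith
    obtain ⟨M, lam, W, W1, hM, hm, hW⟩ := exists_large hN (M0 := 1 / ε) (by positivity)
    rcases (hle lam hm).lt_or_eq with hl | hl
    · exact hfin M lam W W1 hM hl hW
    · have hM0 : 0 < M := lt_trans (by positivity) hM
      obtain ⟨M', lam', W', W1', hM', hm', hW'⟩ := exists_large hN hM0
      rcases (hle lam' hm').lt_or_eq with hl' | hl'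
      · exact hfin M' lam' W' W1' (hM.trans hM') hl' hW'
      · exfalso
        have e : lam' = lam := hl'.trans hl.symm
        subst e
        have h1 := hW'.zero_le hN hW
        have h2 : 1 / M' < 1 / M := one_div_lt_one_div_of_lt hM0 hM'
        linarith
  have hS0 : uStar 0 = 1 := by
    refine le_antisymm (hS1 0 h0b) ?_
    refine le_of_forall_pos_sub_le fun ε hε => ?_
    obtain ⟨lam, a, b, c⟩ := hkey ε hε
    have := hleS 0 h0b lam a b
    linarith
  have hlsb : lamBar N ≤ ls := by
    by_contra hcon
    push Not at hcon
    refine lower_contra hN (l := ls) (C := 1) (r := 1) one_pos (by linarith) ⟨one_pos, le_rfl⟩ ?_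
    intro ε hε
    obtain ⟨lam, a, b, c⟩ := hkey ε hε
    obtain ⟨W, W1, hW, -⟩ := hR lam a b
    refine ⟨lam, W, W1, _, b.le, hW, c, fun ρ hρ => ?_⟩
    have := hW.X3b hN (b.le.trans hcon.le) ρ ⟨hρ.1, hρ.2.le⟩
    linarith
  have hpow : ∀ x : EuclideanSpace ℝ (Fin N), ‖x‖ ^ ((4 : ℝ) / 3) = (‖x‖ ^ 2) ^ (2 / 3 : ℝ) := by
    intro x
    rw [← Real.rpow_natCast, ← Real.rpow_mul (norm_nonneg x)]
    norm_num
  refine ⟨?_, fun x hx => ?_⟩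
  · refine IsGreatest.csSup_eq ⟨⟨0, h0b, hS0⟩, ?_⟩
    rintro _ ⟨x, hx, rfl⟩
    exact hS1 x hx
  · by_cases hx0 : x = 0
    · subst hx0
      have e : ‖(0 : EuclideanSpace ℝ (Fin N))‖ ^ ((4 : ℝ) / 3) = 0 := by
        rw [norm_zero]; exact Real.zero_rpow (by norm_num)
      rw [e, hS0]; simp
    rw [hpow x]
    have hρ : ‖x‖ ^ 2 ∈ Ioo (0 : ℝ) 1 := by
      rw [mem_ball_zero_iff] at hx
      have : 0 < ‖x‖ := norm_pos_iff.2 hx0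
      exact ⟨by positivity, by nlinarith⟩
    have hρp : 0 < (‖x‖ ^ 2) ^ (2 / 3 : ℝ) := Real.rpow_pos_of_pos hρ.1 _
    constructor
    · set C0 := (ls / lamBar N) ^ ((1 : ℝ) / 3) with hC0
      have hq : 1 ≤ ls / lamBar N := (one_le_div hlb).2 hlsb
      have hC01 : 1 ≤ C0 := Real.one_le_rpow hq (by norm_num)
      have hC03 : C0 ^ 3 = ls / lamBar N := by
        rw [hC0, ← Real.rpow_natCast, ← Real.rpow_mul (by linarith)]
        norm_num
      have main : ∀ C > C0, 1 - C * (‖x‖ ^ 2) ^ (2 / 3 : ℝ) ≤ uStar x := by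
        intro C hC
        by_contra hcon
        push Not at hcon
        have hC3 : ls < C ^ 3 * lamBar N := by
          have : C0 ^ 3 < C ^ 3 := pow_lt_pow_left₀ hC (by linarith) (by norm_num)
          rw [hC03, div_lt_iff₀ hlb] at this
          exact this
        refine lower_contra hN (l := ls) (C := C) (r := ‖x‖ ^ 2) (by linarith) hC3
          ⟨hρ.1, hρ.2.le⟩ ?_
        intro ε hε
        obtain ⟨lam, a, b, c⟩ := hkey ε hε
        obtain ⟨W, W1, hW, hWu⟩ := hR lam a b
        refine ⟨lam, W, W1, _, b.le, hW, c, fun ρ hρ' => ?_⟩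
        have h1 := hleS x hx lam a b
        rw [hWu x hx] at h1
        have := hW.X3a hN (by linarith : 1 < C) (b.le.trans hC3.le) hρ (by linarith) ρ
          ⟨hρ'.1, hρ'.2.le⟩
        linarith
      refine le_of_forall_pos_sub_le fun ε hε => ?_
      have := main (C0 + ε / (‖x‖ ^ 2) ^ (2 / 3 : ℝ)) (by
        have : 0 < ε / (‖x‖ ^ 2) ^ (2 / 3 : ℝ) := by positivity
        linarith)
      rw [add_mul, div_mul_cancel₀ _ hρp.ne'] at this
      linarith
    · refine le_of_tendsto (hStar x hx) ?_
      filter_upwards [hev 0 hls0] with l hl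
      obtain ⟨W, W1, hW, hWu⟩ := hR l hl.1 hl.2
      rw [hWu x hx]
      rcases le_total (lamBar N) l with h | h
      · exact (hW.upper hN h _ hρ).le
      · exact hW.X3b hN h _ ⟨hρ.1, hρ.2.le⟩

end

/-- for N ≥ 9 the extremal solution u* is singular and satisfies
1 - C₀|x|^{4/3} ≤ u*(x) ≤ 1 - |x|^{4/3} on B, where C₀ = (λ*/λ̄_N)^{1/3}. -/
theorem extremal_singular_and_bounds_dim_ge_nine (N : ℕ) (hN : 9 ≤ N)
    (uMin : ℝ → EuclideanSpace ℝ (Fin N) → ℝ)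
    (hMin : ∀ lam : ℝ, 0 < lam → lam < sSup (solSet N) →
      IsClassicalSolution N lam (uMin lam) ∧
        ∀ v, IsClassicalSolution N lam v →
          ∀ x ∈ ball (0 : EuclideanSpace ℝ (Fin N)) 1, uMin lam x ≤ v x)
    (hMono : ∀ x ∈ ball (0 : EuclideanSpace ℝ (Fin N)) 1, ∀ l₁ l₂ : ℝ,
      0 < l₁ → l₁ ≤ l₂ → l₂ < sSup (solSet N) → uMin l₁ x ≤ uMin l₂ x)
    (uStar : EuclideanSpace ℝ (Fin N) → ℝ)
    (hStar : ∀ x ∈ ball (0 : EuclideanSpace ℝ (Fin N)) 1,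
      Tendsto (fun lam => uMin lam x) (nhdsWithin (sSup (solSet N)) (Iio (sSup (solSet N))))
        (nhds (uStar x)))
    :
    sSup (uStar '' ball (0 : EuclideanSpace ℝ (Fin N)) 1) = 1 ∧
      ∀ x ∈ ball (0 : EuclideanSpace ℝ (Fin N)) 1,
        1 - (sSup (solSet N) / lamBar N) ^ ((1 : ℝ) / 3) * ‖x‖ ^ ((4 : ℝ) / 3) ≤ uStar x ∧
          uStar x ≤ 1 - ‖x‖ ^ ((4 : ℝ) / 3) := by
  exact final_aux N hN uMin hMin hMono uStar hStar
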